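/- arXiv:math/0212391 — 9 statements merged into one kernel-verified Lean document; each statement's English description precedes it below -/
import Mathlib

section
/- Let X and Y be real Hilbert spaces, let a : X × X → ℝ be a bounded symmetric bilinear form that is positive semidefinite (a(τ,τ) ≥ 0 for all τ ∈ X) with |a(σ,τ)| ≤ A‖σ‖‖τ‖, and let b : X × Y → ℝ be a bounded bilinear form with |b(τ,v)| ≤ B‖τ‖‖v‖. Assume the two Brezzi stability conditions: (S1) there exists γ₁ > 0 such that a(τ,τ) ≥ γ₁‖τ‖² for every τ ∈ X satisfying b(τ,v) = 0 for all v ∈ Y; (S2) there exists γ₂ > 0 such that for every v ∈ Y there exists a nonzero τ ∈ X with b(τ,v) ≥ γ₂‖v‖‖τ‖. Then for every pair of bounded linear functionals f ∈ X* and g ∈ Y* there exists a unique pair (σ,u) ∈ X × Y satisfying a(σ,τ) + b(τ,u) = f(τ) for all τ ∈ X and b(σ,v) = g(v) for all v ∈ Y; moreover there is a constant c depending only on γ₁, γ₂, A and B such that ‖σ‖ + ‖u‖ ≤ c(‖f‖ + ‖g‖). -/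
/-!
Let `K` be the set of `τ` with `b τ = 0`. The inf-sup condition (S2) says that `v ↦ b(·, v)` is
bounded below, so by Hahn–Banach every `g` is `b σ₀` for some `σ₀` with `γ₂ ‖σ₀‖ ≤ ‖g‖`, and since
its range is closed, every functional vanishing on `K` is of the form `b(·, u)`.

By (S1) and Lax–Milgram on `K` there is `k ∈ K` such that `f - a (σ₀ + k)` vanishes on `K`. Writing
this functional as `b(·, u)` gives the solution `(σ₀ + k, u)`. Testing the first equation with
`σ - σ₀ ∈ K` bounds `σ`, and (S2) then bounds `u` through `b(·, u) = f - a σ`; uniqueness is the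
bound for `f = g = 0`.
-/

open InnerProductSpace

section Functionals

variable {𝕜 E F : Type*} [RCLike 𝕜] [NormedAddCommGroup E] [NormedSpace 𝕜 E]
  [NormedAddCommGroup F] [NormedSpace 𝕜 F]

theorem mul_norm_le_norm_of_mul_norm_sq_le_norm_apply {c : ℝ} (φ : StrongDual 𝕜 E) (x : E)
    (h : c * ‖x‖ ^ 2 ≤ ‖φ x‖) : c * ‖x‖ ≤ ‖φ‖ := by
  rcases (norm_nonneg x).eq_or_lt with hx | hx
  · simp [← hx]
  · refine le_of_mul_le_mul_right ?_ hx
    calc c * ‖x‖ * ‖x‖ = c * ‖x‖ ^ 2 := by ring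
      _ ≤ ‖φ x‖ := h
      _ ≤ ‖φ‖ * ‖x‖ := φ.le_opNorm x

theorem norm_sub_apply_le {C : ℝ} {T : E →L[𝕜] F} (hT : ‖T‖ ≤ C) (y : F) (x : E) :
    ‖y - T x‖ ≤ ‖y‖ + C * ‖x‖ :=
  (norm_sub_le _ _).trans (by gcongr; exact T.le_of_opNorm_le hT x)

theorem antilipschitzWith_of_mul_norm_le {c : ℝ} (hc : 0 < c) (S : E →L[𝕜] F)
    (hS : ∀ x, c * ‖x‖ ≤ ‖S x‖) : AntilipschitzWith c⁻¹.toNNReal S :=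
  S.antilipschitz_of_bound fun x ↦ by
    rw [Real.coe_toNNReal _ (by positivity), le_inv_mul_iff₀ hc]
    exact hS x

theorem exists_comp_eq_of_mul_norm_le {c : ℝ} (hc : 0 < c) (S : E →L[𝕜] F)
    (hS : ∀ x, c * ‖x‖ ≤ ‖S x‖) (g : StrongDual 𝕜 E) :
    ∃ h : StrongDual 𝕜 F, h.comp S = g ∧ c * ‖h‖ ≤ ‖g‖ := by
  let e : E ≃ₗ[𝕜] S.range :=
    LinearEquiv.ofInjective S.toLinearMap (antilipschitzWith_of_mul_norm_le hc S hS).injective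
  have norm_le : ∀ y, ‖g (e.symm y)‖ ≤ ‖g‖ / c * ‖y‖ := fun y ↦ by
    have symm_le : c * ‖e.symm y‖ ≤ ‖y‖ := by
      calc c * ‖e.symm y‖ ≤ ‖e (e.symm y)‖ := hS (e.symm y)
        _ = ‖y‖ := by rw [e.apply_symm_apply]
    calc ‖g (e.symm y)‖ ≤ ‖g‖ * ‖e.symm y‖ := g.le_opNorm _
      _ = ‖g‖ / c * (c * ‖e.symm y‖) := by field_simp
      _ ≤ ‖g‖ / c * ‖y‖ := by gcongr
  let φ : StrongDual 𝕜 S.range := (g.toLinearMap ∘ₗ e.symm.toLinearMap).mkContinuous _ norm_le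
  obtain ⟨h, h_ext, h_norm⟩ := exists_extension_norm_eq S.range φ
  refine ⟨h, ContinuousLinearMap.ext fun x ↦ ?_, ?_⟩
  · calc h (S x) = g (e.symm (e x)) := h_ext (e x)
      _ = g x := by rw [e.symm_apply_apply]
  · rw [h_norm, mul_comm, ← le_div_iff₀ hc]
    exact LinearMap.mkContinuous_norm_le _ (by positivity) norm_le

end Functionals

theorem exists_continuousLinearMap₂_of_isLinearMap {𝕜 E F G : Type*} [NontriviallyNormedField 𝕜]
    [SeminormedAddCommGroup E] [NormedSpace 𝕜 E] [SeminormedAddCommGroup F] [NormedSpace 𝕜 F]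
    [SeminormedAddCommGroup G] [NormedSpace 𝕜 G] {β : E → F → G} {C : ℝ}
    (hr : ∀ x, IsLinearMap 𝕜 (β x)) (hl : ∀ y, IsLinearMap 𝕜 fun x ↦ β x y)
    (hC : ∀ x y, ‖β x y‖ ≤ C * ‖x‖ * ‖y‖) :
    ∃ β' : E →L[𝕜] F →L[𝕜] G, (fun x y ↦ β' x y) = β ∧ ‖β'‖ ≤ max C 0 :=
  ⟨(LinearMap.mk₂ 𝕜 β (fun x x' y ↦ (hl y).map_add x x') (fun c x y ↦ (hl y).map_smul c x)
      (fun x ↦ (hr x).map_add) (fun c x ↦ (hr x).map_smul c)).mkContinuous₂ C hC,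
    rfl, LinearMap.mkContinuous₂_norm_le' _ hC⟩

theorem exists_mem_forall_mem_apply_eq_of_coercive {X : Type*} [NormedAddCommGroup X]
    [InnerProductSpace ℝ X] (K : Submodule ℝ X) [CompleteSpace K] {γ : ℝ} (hγ : 0 < γ)
    (a : X →L[ℝ] X →L[ℝ] ℝ) (ha : ∀ τ ∈ K, γ * ‖τ‖ ^ 2 ≤ a τ τ) (f : StrongDual ℝ X) :
    ∃ σ ∈ K, ∀ τ ∈ K, a σ τ = f τ := by
  have coercive : IsCoercive (a.bilinearComp K.subtypeL K.subtypeL) :=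
    ⟨γ, hγ, fun τ ↦ by simpa [mul_assoc, sq] using ha τ τ.2⟩
  let σ := coercive.continuousLinearEquivOfBilin.symm ((toDual ℝ K).symm (f.comp K.subtypeL))
  refine ⟨σ, σ.2, fun τ hτ ↦ ?_⟩
  calc a σ τ = inner ℝ (coercive.continuousLinearEquivOfBilin σ) ⟨τ, hτ⟩ :=
        (coercive.continuousLinearEquivOfBilin_apply σ ⟨τ, hτ⟩).symm
    _ = f τ := by
      rw [ContinuousLinearEquiv.apply_symm_apply, toDual_symm_apply]
      rfl

section InfSup

variable {X Y : Type*} [NormedAddCommGroup X] [NormedAddCommGroup Y] [NormedSpace ℝ Y] {γ : ℝ}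

theorem mul_norm_le_norm_flip_apply [NormedSpace ℝ X] (b : X →L[ℝ] Y →L[ℝ] ℝ) {v : Y}
    (hv : ∃ τ : X, τ ≠ 0 ∧ γ * ‖v‖ * ‖τ‖ ≤ b τ v) : γ * ‖v‖ ≤ ‖b.flip v‖ := by
  obtain ⟨τ, hτ, hle⟩ := hv
  refine le_of_mul_le_mul_right ?_ (norm_pos_iff.2 hτ)
  calc γ * ‖v‖ * ‖τ‖ ≤ b.flip v τ := hle
    _ ≤ ‖b.flip v τ‖ := Real.le_norm_self _
    _ ≤ ‖b.flip v‖ * ‖τ‖ := (b.flip v).le_opNorm τ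

theorem norm_snd_le_of_saddlePoint [NormedSpace ℝ X] {A : ℝ} {a : X →L[ℝ] X →L[ℝ] ℝ}
    {b : X →L[ℝ] Y →L[ℝ] ℝ} (hγ : 0 < γ) (hA : ‖a‖ ≤ A)
    (hb : ∀ v, γ * ‖v‖ ≤ ‖b.flip v‖) {σ : X} {u : Y} {f : StrongDual ℝ X}
    (hf : a σ + b.flip u = f) : ‖u‖ ≤ (‖f‖ + A * ‖σ‖) / γ := by
  rw [le_div_iff₀' hγ]
  calc γ * ‖u‖ ≤ ‖b.flip u‖ := hb u
    _ = ‖f - a σ‖ := by rw [← hf, add_sub_cancel_left]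
    _ ≤ ‖f‖ + A * ‖σ‖ := norm_sub_apply_le hA f σ

variable [InnerProductSpace ℝ X] [CompleteSpace X]

/-- The operator `Y → X` sending `v` to the Riesz representative of the functional `b(·, v)`; it is
the Hilbert-space form of the transpose `b.flip : Y → X*`. -/
noncomputable def rieszFlip (b : X →L[ℝ] Y →L[ℝ] ℝ) : Y →L[ℝ] X :=
  (toDual ℝ X).symm.toContinuousLinearEquiv.toContinuousLinearMap.comp b.flip

theorem inner_rieszFlip_left (b : X →L[ℝ] Y →L[ℝ] ℝ) (v : Y) (τ : X) :
    inner ℝ (rieszFlip b v) τ = b τ v :=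
  toDual_symm_apply

theorem norm_rieszFlip_apply (b : X →L[ℝ] Y →L[ℝ] ℝ) (v : Y) : ‖rieszFlip b v‖ = ‖b.flip v‖ :=
  (toDual ℝ X).symm.norm_map _

theorem orthogonal_range_rieszFlip (b : X →L[ℝ] Y →L[ℝ] ℝ) : (rieszFlip b).rangeᗮ = b.ker := by
  ext τ
  simp [Submodule.mem_orthogonal, inner_rieszFlip_left, ContinuousLinearMap.ext_iff]

theorem exists_apply_eq_of_infSup (hγ : 0 < γ) (b : X →L[ℝ] Y →L[ℝ] ℝ)
    (hb : ∀ v, γ * ‖v‖ ≤ ‖b.flip v‖) (g : StrongDual ℝ Y) :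
    ∃ σ, b σ = g ∧ γ * ‖σ‖ ≤ ‖g‖ := by
  obtain ⟨h, rfl, h_norm⟩ := exists_comp_eq_of_mul_norm_le hγ (rieszFlip b)
    (fun v ↦ (hb v).trans_eq (norm_rieszFlip_apply b v).symm) g
  refine ⟨(toDual ℝ X).symm h, ContinuousLinearMap.ext fun v ↦ ?_, ?_⟩
  · rw [← inner_rieszFlip_left, real_inner_comm, toDual_symm_apply]
    rfl
  · rwa [LinearIsometryEquiv.norm_map]

theorem exists_flip_apply_eq_of_infSup [CompleteSpace Y] (hγ : 0 < γ) (b : X →L[ℝ] Y →L[ℝ] ℝ)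
    (hb : ∀ v, γ * ‖v‖ ≤ ‖b.flip v‖) (φ : StrongDual ℝ X) (hφ : ∀ τ ∈ b.ker, φ τ = 0) :
    ∃ u, b.flip u = φ := by
  have isClosed_range : IsClosed ((rieszFlip b).range : Set X) :=
    (antilipschitzWith_of_mul_norm_le hγ (rieszFlip b) fun v ↦
      (hb v).trans_eq (norm_rieszFlip_apply b v).symm).isClosed_range
        (rieszFlip b).uniformContinuous
  have : CompleteSpace (rieszFlip b).range := isClosed_range.completeSpace_coe
  have mem_range : (toDual ℝ X).symm φ ∈ (rieszFlip b).range := by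
    rw [← (rieszFlip b).range.orthogonal_orthogonal, orthogonal_range_rieszFlip,
      Submodule.mem_orthogonal']
    exact fun τ hτ ↦ toDual_symm_apply.trans (hφ τ hτ)
  obtain ⟨u, hu⟩ := mem_range
  exact ⟨u, (toDual ℝ X).symm.injective hu⟩

end InfSup

section SaddlePoint

variable {X Y : Type*} [NormedAddCommGroup X] [InnerProductSpace ℝ X] [CompleteSpace X]
  [NormedAddCommGroup Y] [NormedSpace ℝ Y] {γ₁ γ₂ A : ℝ}
  {a : X →L[ℝ] X →L[ℝ] ℝ} {b : X →L[ℝ] Y →L[ℝ] ℝ}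

theorem exists_saddlePoint [CompleteSpace Y] (hγ₁ : 0 < γ₁) (hγ₂ : 0 < γ₂)
    (ha : ∀ τ ∈ b.ker, γ₁ * ‖τ‖ ^ 2 ≤ a τ τ) (hb : ∀ v, γ₂ * ‖v‖ ≤ ‖b.flip v‖)
    (f : StrongDual ℝ X) (g : StrongDual ℝ Y) :
    ∃ σ u, a σ + b.flip u = f ∧ b σ = g := by
  obtain ⟨σ₀, hσ₀, -⟩ := exists_apply_eq_of_infSup hγ₂ b hb g
  obtain ⟨k, hk, hk_eq⟩ := exists_mem_forall_mem_apply_eq_of_coercive b.ker hγ₁ a ha (f - a σ₀)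
  have residual_eq_zero : ∀ τ ∈ b.ker, (f - a (σ₀ + k)) τ = 0 := fun τ hτ ↦ by
    simp [hk_eq τ hτ]
  obtain ⟨u, hu⟩ := exists_flip_apply_eq_of_infSup hγ₂ b hb _ residual_eq_zero
  have b_k : b k = 0 := hk
  exact ⟨σ₀ + k, u, by rw [hu, add_sub_cancel], by rw [map_add, hσ₀, b_k, add_zero]⟩

theorem norm_fst_le_of_saddlePoint (hγ₁ : 0 < γ₁) (hγ₂ : 0 < γ₂) (hA : ‖a‖ ≤ A)
    (ha : ∀ τ ∈ b.ker, γ₁ * ‖τ‖ ^ 2 ≤ a τ τ) (hb : ∀ v, γ₂ * ‖v‖ ≤ ‖b.flip v‖) {σ : X} {u : Y}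
    {f : StrongDual ℝ X} {g : StrongDual ℝ Y} (hf : a σ + b.flip u = f) (hg : b σ = g) :
    ‖σ‖ ≤ ‖g‖ / γ₂ + (‖f‖ + A * (‖g‖ / γ₂)) / γ₁ := by
  have hA₀ : 0 ≤ A := (norm_nonneg a).trans hA
  obtain ⟨σ₀, hσ₀, σ₀_le⟩ := exists_apply_eq_of_infSup hγ₂ b hb g
  rw [← le_div_iff₀' hγ₂] at σ₀_le
  have mem_ker : σ - σ₀ ∈ b.ker := by simp [hg, hσ₀]
  have apply_self : a (σ - σ₀) (σ - σ₀) = (f - a σ₀) (σ - σ₀) := by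
    have : b.flip u (σ - σ₀) = 0 := by simp [hg, hσ₀]
    rw [← hf, map_sub a, add_sub_right_comm, add_apply, this, add_zero]
  have sub_le : ‖σ - σ₀‖ ≤ (‖f‖ + A * (‖g‖ / γ₂)) / γ₁ := by
    rw [le_div_iff₀' hγ₁]
    calc γ₁ * ‖σ - σ₀‖ ≤ ‖f - a σ₀‖ := mul_norm_le_norm_of_mul_norm_sq_le_norm_apply _ _ <|
          ((ha _ mem_ker).trans_eq apply_self).trans (Real.le_norm_self _)
      _ ≤ ‖f‖ + A * ‖σ₀‖ := norm_sub_apply_le hA f σ₀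
      _ ≤ ‖f‖ + A * (‖g‖ / γ₂) := by gcongr
  calc ‖σ‖ ≤ ‖σ₀‖ + ‖σ - σ₀‖ := norm_le_norm_add_norm_sub' σ σ₀
    _ ≤ ‖g‖ / γ₂ + (‖f‖ + A * (‖g‖ / γ₂)) / γ₁ := add_le_add σ₀_le sub_le

/-- The factor by which `‖f‖ + ‖g‖` bounds the `X`-component of a saddle point, where `γ₁` is the
coercivity constant of `a` on the kernel of `b`, `γ₂` the inf-sup constant of `b`, and `A` a bound
for `‖a‖`. -/
noncomputable def brezziConstFst (γ₁ γ₂ A : ℝ) : ℝ := 1 / γ₂ + (1 + A / γ₂) / γ₁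

/-- The stability constant of the saddle-point problem: the factor by which `‖f‖ + ‖g‖` bounds
`‖σ‖ + ‖u‖`, with `γ₁`, `γ₂`, `A` as in `brezziConstFst`. -/
noncomputable def brezziConst (γ₁ γ₂ A : ℝ) : ℝ :=
  brezziConstFst γ₁ γ₂ A + (1 + A * brezziConstFst γ₁ γ₂ A) / γ₂

theorem norm_add_norm_le_of_saddlePoint (hγ₁ : 0 < γ₁) (hγ₂ : 0 < γ₂) (hA : ‖a‖ ≤ A)
    (ha : ∀ τ ∈ b.ker, γ₁ * ‖τ‖ ^ 2 ≤ a τ τ) (hb : ∀ v, γ₂ * ‖v‖ ≤ ‖b.flip v‖) {σ : X} {u : Y}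
    {f : StrongDual ℝ X} {g : StrongDual ℝ Y} (hf : a σ + b.flip u = f) (hg : b σ = g) :
    ‖σ‖ + ‖u‖ ≤ brezziConst γ₁ γ₂ A * (‖f‖ + ‖g‖) := by
  have hA₀ : 0 ≤ A := (norm_nonneg a).trans hA
  set N := ‖f‖ + ‖g‖
  have f_le : ‖f‖ ≤ N := le_add_of_nonneg_right (norm_nonneg g)
  have g_le : ‖g‖ ≤ N := le_add_of_nonneg_left (norm_nonneg f)
  have σ_le : ‖σ‖ ≤ brezziConstFst γ₁ γ₂ A * N :=
    calc ‖σ‖ ≤ ‖g‖ / γ₂ + (‖f‖ + A * (‖g‖ / γ₂)) / γ₁ :=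
          norm_fst_le_of_saddlePoint hγ₁ hγ₂ hA ha hb hf hg
      _ ≤ N / γ₂ + (N + A * (N / γ₂)) / γ₁ := by gcongr
      _ = brezziConstFst γ₁ γ₂ A * N := by rw [brezziConstFst]; ring
  calc ‖σ‖ + ‖u‖ ≤ ‖σ‖ + (‖f‖ + A * ‖σ‖) / γ₂ := by
        gcongr; exact norm_snd_le_of_saddlePoint hγ₂ hA hb hf
    _ ≤ brezziConstFst γ₁ γ₂ A * N + (N + A * (brezziConstFst γ₁ γ₂ A * N)) / γ₂ := by gcongr
    _ = brezziConst γ₁ γ₂ A * N := by rw [brezziConst]; ring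

theorem saddlePoint_unique (hγ₁ : 0 < γ₁) (hγ₂ : 0 < γ₂)
    (ha : ∀ τ ∈ b.ker, γ₁ * ‖τ‖ ^ 2 ≤ a τ τ) (hb : ∀ v, γ₂ * ‖v‖ ≤ ‖b.flip v‖) {p q : X × Y}
    (hpq : a p.1 + b.flip p.2 = a q.1 + b.flip q.2) (hpq' : b p.1 = b q.1) : p = q := by
  have homogeneous : a (p.1 - q.1) + b.flip (p.2 - q.2) = 0 := by
    rw [map_sub, map_sub, ← add_sub_add_comm, hpq, sub_self]
  have norm_le_zero := norm_add_norm_le_of_saddlePoint hγ₁ hγ₂ le_rfl ha hb homogeneous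
    (by rw [map_sub, hpq', sub_self])
  rw [norm_zero, norm_zero, add_zero, mul_zero] at norm_le_zero
  have norm_nonneg_fst := norm_nonneg (p.1 - q.1)
  have norm_nonneg_snd := norm_nonneg (p.2 - q.2)
  exact Prod.ext (sub_eq_zero.1 <| norm_eq_zero.1 <| by linarith)
    (sub_eq_zero.1 <| norm_eq_zero.1 <| by linarith)

theorem brezzi_saddle_point_general [CompleteSpace Y] (hγ₁ : 0 < γ₁) (hγ₂ : 0 < γ₂) (hA : ‖a‖ ≤ A)
    (ha : ∀ τ ∈ b.ker, γ₁ * ‖τ‖ ^ 2 ≤ a τ τ) (hb : ∀ v, γ₂ * ‖v‖ ≤ ‖b.flip v‖)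
    (f : StrongDual ℝ X) (g : StrongDual ℝ Y) :
    (∃! p : X × Y, a p.1 + b.flip p.2 = f ∧ b p.1 = g) ∧
      ∀ p : X × Y, a p.1 + b.flip p.2 = f → b p.1 = g →
        ‖p.1‖ + ‖p.2‖ ≤ brezziConst γ₁ γ₂ A * (‖f‖ + ‖g‖) := by
  obtain ⟨σ, u, hf, hg⟩ := exists_saddlePoint hγ₁ hγ₂ ha hb f g
  exact ⟨⟨(σ, u), ⟨hf, hg⟩, fun p hp ↦
      saddlePoint_unique hγ₁ hγ₂ ha hb (hp.1.trans hf.symm) (hp.2.trans hg.symm)⟩,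
    fun p ↦ norm_add_norm_le_of_saddlePoint hγ₁ hγ₂ hA ha hb⟩

end SaddlePoint

/-- **Brezzi's theorem** on well-posedness of saddle-point problems. -/
theorem brezzi_saddle_point (γ₁ γ₂ A B : ℝ) (hγ₁ : 0 < γ₁) (hγ₂ : 0 < γ₂) :
    ∃ c : ℝ, ∀ (X Y : Type)
      [NormedAddCommGroup X] [InnerProductSpace ℝ X] [CompleteSpace X]
      [NormedAddCommGroup Y] [InnerProductSpace ℝ Y] [CompleteSpace Y]
      (a : X → X → ℝ) (b : X → Y → ℝ),
      (∀ σ : X, IsLinearMap ℝ (a σ)) →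
      (∀ τ : X, IsLinearMap ℝ (fun σ => a σ τ)) →
      (∀ σ τ : X, a σ τ = a τ σ) →
      (∀ τ : X, 0 ≤ a τ τ) →
      (∀ σ τ : X, |a σ τ| ≤ A * ‖σ‖ * ‖τ‖) →
      (∀ τ : X, IsLinearMap ℝ (b τ)) →
      (∀ v : Y, IsLinearMap ℝ (fun τ => b τ v)) →
      (∀ (τ : X) (v : Y), |b τ v| ≤ B * ‖τ‖ * ‖v‖) →
      -- (S1)
      (∀ τ : X, (∀ v : Y, b τ v = 0) → γ₁ * ‖τ‖ ^ 2 ≤ a τ τ) →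
      -- (S2)
      (∀ v : Y, ∃ τ : X, τ ≠ 0 ∧ γ₂ * ‖v‖ * ‖τ‖ ≤ b τ v) →
      ∀ (f : X →L[ℝ] ℝ) (g : Y →L[ℝ] ℝ),
        (∃! p : X × Y, (∀ τ : X, a p.1 τ + b τ p.2 = f τ) ∧ (∀ v : Y, b p.1 v = g v)) ∧
        (∀ p : X × Y, (∀ τ : X, a p.1 τ + b τ p.2 = f τ) → (∀ v : Y, b p.1 v = g v) →
          ‖p.1‖ + ‖p.2‖ ≤ c * (‖f‖ + ‖g‖)) := by
  refine ⟨brezziConst γ₁ γ₂ (max A 0), fun X Y _ _ _ _ _ _ a b ha_right ha_left _ _ ha_bound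
    hb_right hb_left hb_bound hS1 hS2 f g ↦ ?_⟩
  obtain ⟨a, rfl, hA⟩ := exists_continuousLinearMap₂_of_isLinearMap ha_right ha_left ha_bound
  obtain ⟨b, rfl, -⟩ := exists_continuousLinearMap₂_of_isLinearMap hb_right hb_left hb_bound
  simpa only [ContinuousLinearMap.ext_iff, add_apply, ContinuousLinearMap.flip_apply]
    using brezzi_saddle_point_general hγ₁ hγ₂ hA
    (fun τ hτ ↦ hS1 τ (DFunLike.congr_fun hτ)) (fun v ↦ mul_norm_le_norm_flip_apply b (hS2 v)) f g
end

section
/- Let Q and R be real inner product spaces, T : Q → R a linear map, and P := range T ⊆ R. Let λ ∈ ℝ and let E ∈ Q be nonzero. Then the following are equivalent: (i) λ > 0 and ⟨T E, T F⟩ = λ⟨E,F⟩ for all F ∈ Q; (ii) there exists p ∈ P such that (E,p) ≠ 0, ⟨E,F⟩ + ⟨T F, p⟩ = 0 for all F ∈ Q, and ⟨T E, q⟩ = −λ⟨p,q⟩ for all q ∈ P. Moreover, in case (i) holds, the element p in (ii) can be taken to be p = −λ⁻¹ T E, and in case (ii) one necessarily has λ > 0. -/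
open scoped RealInnerProductSpace

/-!
Testing the second mixed equation with `q = T F` and inserting the first one eliminates `p`, which
leaves the Galerkin equation. Testing the first equation with `F = E` and the second one with
`q = p` gives `‖E‖² = λ ‖p‖²`, so `E ≠ 0` forces `λ > 0`: this is how the mixed problem loses the
kernel of `T`.
-/

section

open scoped InnerProductSpace ComplexOrder

variable {𝕜 Q R : Type*} [RCLike 𝕜] [SeminormedAddCommGroup Q] [InnerProductSpace 𝕜 Q]
  [SeminormedAddCommGroup R] [InnerProductSpace 𝕜 R] {T : Q →ₗ[𝕜] R} {lam : 𝕜} {E : Q} {p : R}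

/-- The Galerkin eigenvalue equation `⟪T F, T E⟫ = λ ⟪F, E⟫` for all `F`. The vector `E` may be
zero. Test functions stand in the first, conjugate-linear slot, so that `λ` is not conjugated over
a complex field. -/
def IsGalerkinEigenpair (T : Q →ₗ[𝕜] R) (lam : 𝕜) (E : Q) : Prop :=
  ∀ F : Q, ⟪T F, T E⟫_𝕜 = lam * ⟪F, E⟫_𝕜

/-- The mixed eigenvalue equations for `(E, p)` on `Q × P`, where `P = range T`. The pair `(E, p)`
may be zero, and membership of `p` in `P` is part of the notion. -/
def IsMixedEigenpair (T : Q →ₗ[𝕜] R) (lam : 𝕜) (E : Q) (p : R) : Prop :=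
  p ∈ LinearMap.range T ∧
    (∀ F : Q, ⟪F, E⟫_𝕜 + ⟪T F, p⟫_𝕜 = 0) ∧
    ∀ q ∈ LinearMap.range T, ⟪q, T E⟫_𝕜 = -lam * ⟪q, p⟫_𝕜

theorem IsGalerkinEigenpair.isMixedEigenpair (h : IsGalerkinEigenpair T lam E) (hlam : lam ≠ 0) :
    IsMixedEigenpair T lam E (-lam⁻¹ • T E) := by
  refine ⟨Submodule.smul_mem _ _ (LinearMap.mem_range_self T E), fun F => ?_, fun q _ => ?_⟩
  · rw [inner_smul_right, h F, neg_mul, inv_mul_cancel_left₀ hlam, add_neg_cancel]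
  · rw [inner_smul_right, neg_mul lam⁻¹, neg_mul_neg, mul_inv_cancel_left₀ hlam]

theorem IsMixedEigenpair.isGalerkinEigenpair (h : IsMixedEigenpair T lam E p) :
    IsGalerkinEigenpair T lam E := by
  obtain ⟨-, hfirst, hsecond⟩ := h
  intro F
  calc ⟪T F, T E⟫_𝕜 = -lam * ⟪T F, p⟫_𝕜 := hsecond (T F) (LinearMap.mem_range_self T F)
    _ = lam * ⟪F, E⟫_𝕜 := by rw [eq_neg_of_add_eq_zero_left (hfirst F), neg_mul, mul_neg]

theorem IsMixedEigenpair.norm_sq_eq (h : IsMixedEigenpair T lam E p) :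
    (‖E‖ : 𝕜) ^ 2 = lam * (‖p‖ : 𝕜) ^ 2 := by
  obtain ⟨hp, hfirst, hsecond⟩ := h
  have inner_E_E : ⟪E, E⟫_𝕜 = -⟪T E, p⟫_𝕜 := eq_neg_of_add_eq_zero_left (hfirst E)
  calc (‖E‖ : 𝕜) ^ 2 = starRingEnd 𝕜 ⟪E, E⟫_𝕜 := by
        rw [inner_conj_symm, inner_self_eq_norm_sq_to_K]
    _ = -⟪p, T E⟫_𝕜 := by rw [inner_E_E, map_neg, inner_conj_symm]
    _ = lam * (‖p‖ : 𝕜) ^ 2 := by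
        rw [hsecond p hp, neg_mul, neg_neg, inner_self_eq_norm_sq_to_K]

theorem IsMixedEigenpair.eigenvalue_pos (h : IsMixedEigenpair T lam E p) (hE : ‖E‖ ≠ 0) :
    0 < lam := by
  have hp : ‖p‖ ≠ 0 := by
    intro hp
    have hE_sq : (‖E‖ : 𝕜) ^ 2 = 0 := by
      rw [h.norm_sq_eq, hp, RCLike.ofReal_zero, zero_pow two_ne_zero, mul_zero]
    exact hE (RCLike.ofReal_eq_zero.1 (pow_eq_zero_iff two_ne_zero |>.1 hE_sq))
  have hlam : lam = ((‖E‖ ^ 2 / ‖p‖ ^ 2 : ℝ) : 𝕜) := by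
    push_cast
    exact eq_div_of_mul_eq (pow_ne_zero 2 (RCLike.ofReal_ne_zero.2 hp)) h.norm_sq_eq.symm
  rw [hlam, RCLike.ofReal_pos]
  positivity

theorem galerkin_mixed_eigen_equiv_general (T : Q →ₗ[𝕜] R) (lam : 𝕜) (hE : ‖E‖ ≠ 0) :
    ((0 < lam ∧ IsGalerkinEigenpair T lam E) ↔ ∃ p, IsMixedEigenpair T lam E p) ∧
    ((0 < lam ∧ IsGalerkinEigenpair T lam E) → IsMixedEigenpair T lam E (-lam⁻¹ • T E)) ∧
    ((∃ p, IsMixedEigenpair T lam E p) → 0 < lam) := by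
  have mixed_of_galerkin : (0 < lam ∧ IsGalerkinEigenpair T lam E) →
      IsMixedEigenpair T lam E (-lam⁻¹ • T E) :=
    fun ⟨hlam, h⟩ => h.isMixedEigenpair hlam.ne'
  have pos_of_mixed : (∃ p, IsMixedEigenpair T lam E p) → 0 < lam :=
    fun ⟨_, h⟩ => h.eigenvalue_pos hE
  exact ⟨⟨fun h => ⟨_, mixed_of_galerkin h⟩,
    fun h => ⟨pos_of_mixed h, h.choose_spec.isGalerkinEigenpair⟩⟩, mixed_of_galerkin, pos_of_mixed⟩

end

/-- Equivalence of the Galerkin eigenvalue problem `⟪T E, T F⟫ = λ ⟪E, F⟫` and the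
mixed eigenvalue problem on `Q × P` with `P = range T`, for a nonzero eigenvector `E`. -/
theorem galerkin_mixed_eigen_equiv
    {Q R : Type*} [NormedAddCommGroup Q] [InnerProductSpace ℝ Q]
    [NormedAddCommGroup R] [InnerProductSpace ℝ R]
    (T : Q →ₗ[ℝ] R) (lam : ℝ) (E : Q) (hE : E ≠ 0) :
    (((0 < lam ∧ ∀ F : Q, ⟪T E, T F⟫ = lam * ⟪E, F⟫) ↔
      (∃ p ∈ LinearMap.range T, (E, p) ≠ 0 ∧
        (∀ F : Q, ⟪E, F⟫ + ⟪T F, p⟫ = 0) ∧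
        (∀ q ∈ LinearMap.range T, ⟪T E, q⟫ = -lam * ⟪p, q⟫))) ∧
    ((0 < lam ∧ ∀ F : Q, ⟪T E, T F⟫ = lam * ⟪E, F⟫) →
      ((-lam⁻¹ • T E) ∈ LinearMap.range T ∧ (E, -lam⁻¹ • T E) ≠ 0 ∧
        (∀ F : Q, ⟪E, F⟫ + ⟪T F, -lam⁻¹ • T E⟫ = 0) ∧
        (∀ q ∈ LinearMap.range T, ⟪T E, q⟫ = -lam * ⟪-lam⁻¹ • T E, q⟫))) ∧
    ((∃ p ∈ LinearMap.range T, (E, p) ≠ 0 ∧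
        (∀ F : Q, ⟪E, F⟫ + ⟪T F, p⟫ = 0) ∧
        (∀ q ∈ LinearMap.range T, ⟪T E, q⟫ = -lam * ⟪p, q⟫)) → 0 < lam)) := by
  simpa only [IsGalerkinEigenpair, IsMixedEigenpair, real_inner_comm, ne_eq, Prod.mk_eq_zero, hE,
    false_and, not_false_eq_true, true_and] using
    galerkin_mixed_eigen_equiv_general T lam (norm_ne_zero_iff.2 hE)
end

section
/- Let v₀, v₁, v₂, v₃ ∈ ℝ³ be affinely independent (the vertices of a nondegenerate tetrahedron T). Let p(x) = a + b•x with a ∈ ℝ³, b ∈ ℝ. For each of the four faces f of T, let n_f be a nonzero vector normal to the plane of f. If for each face f one has p(x)·n_f = 0 for all x in the plane through the three vertices of f, then p = 0 (i.e., a = 0 and b = 0). -/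
/-- The dot product on `ℝ³`. -/
def dot3 (x y : Fin 3 → ℝ) : ℝ := ∑ i, x i * y i

/-!
Fix a vertex `vⱼ`. A normal `nᵢ` of a face containing `vⱼ` annihilates every edge at `vⱼ` except
`vᵢ - vⱼ`, so `nᵢ ≠ 0` forces `nᵢ` to be a nonzero multiple of the `i`-th coordinate functional of
the basis formed by these edges. The normal conditions on the faces through `vⱼ` therefore say that
all coordinates of `p(vⱼ)` vanish. Hence the affine map `p` vanishes at all vertices, and comparing
two of them gives `b = 0` and then `a = 0`.
-/

section Basis

open Module (Basis)

variable {κ R M N : Type*} [Semiring R] [AddCommMonoid M] [Module R M] [AddCommMonoid N]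
  [Module R N] (e : Basis κ R M)

theorem map_eq_repr_smul_of_map_basis_eq_zero {φ : M →ₗ[R] N} {i : κ}
    (hφ : ∀ l, l ≠ i → φ (e l) = 0) (w : M) : φ w = e.repr w i • φ (e i) := by
  conv_lhs => rw [← e.linearCombination_repr w, Finsupp.linearCombination_apply, map_finsuppSum]
  simp only [map_smul]
  refine Finsupp.sum_eq_single i (fun l _ hl ↦ ?_) (fun _ ↦ zero_smul R _)
  rw [hφ l hl, smul_zero]

theorem map_basis_ne_zero_of_ne_zero {φ : M →ₗ[R] N} {i : κ} (hφ₀ : φ ≠ 0)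
    (hφ : ∀ l, l ≠ i → φ (e l) = 0) : φ (e i) ≠ 0 := fun hi ↦
  hφ₀ <| LinearMap.ext fun w ↦ by
    rw [map_eq_repr_smul_of_map_basis_eq_zero e hφ, hi, smul_zero, LinearMap.zero_apply]

theorem eq_zero_of_forall_diagonal_functional_eq_zero [NoZeroDivisors R] {φ : κ → M →ₗ[R] R}
    (hφ₀ : ∀ i, φ i ≠ 0) (hφ : ∀ i l, l ≠ i → φ i (e l) = 0) {w : M} (hw : ∀ i, φ i w = 0) :
    w = 0 := by
  refine e.ext_elem fun i ↦ ?_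
  have h_mul : e.repr w i * φ i (e i) = 0 := by
    rw [← smul_eq_mul, ← map_eq_repr_smul_of_map_basis_eq_zero e (hφ i), hw i]
  have h_coord := (mul_eq_zero.mp h_mul).resolve_right
    (map_basis_ne_zero_of_ne_zero e (hφ₀ i) (hφ i))
  rw [h_coord, map_zero, Finsupp.zero_apply]

end Basis

section Simplex

variable {ι k V : Type*} [Ring k] [AddCommGroup V] [Module k V]

theorem eq_zero_of_forall_face_conormal_eq_zero [NoZeroDivisors k] {P : Type*} [AddTorsor V P]
    (v : AffineBasis ι k P) {φ : ι → V →ₗ[k] k} (hφ₀ : ∀ i, φ i ≠ 0)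
    (hφ : ∀ i j l, j ≠ i → l ≠ i → φ i (v j -ᵥ v l) = 0) (j : ι) {w : V}
    (hw : ∀ i, i ≠ j → φ i w = 0) : w = 0 := by
  refine eq_zero_of_forall_diagonal_functional_eq_zero (v.basisOf j)
    (φ := fun i : {i // i ≠ j} ↦ φ i) (fun i ↦ hφ₀ i) (fun i l hl ↦ ?_) (fun i ↦ hw i i.2)
  rw [AffineBasis.basisOf_apply]
  exact hφ i l j (Subtype.coe_ne_coe.mpr hl) i.2.symm

theorem eq_zero_and_eq_zero_of_forall_add_smul_eq_zero [Nontrivial ι] {v : ι → V}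
    (hv : AffineIndependent k v) {a : V} {b : k} (h : ∀ j, a + b • v j = 0) : a = 0 ∧ b = 0 := by
  obtain ⟨i, j, hij⟩ := exists_pair_ne ι
  have h_edge : b • (v i -ᵥ v j) = 0 := by
    rw [vsub_eq_sub, smul_sub, ← add_sub_add_left_eq_sub _ _ a, h i, h j, sub_zero]
  have h_indep := (affineIndependent_iff_linearIndependent_vsub k v j).mp hv
  have hb : b = 0 :=
    h_indep.smul_left_injective ⟨i, hij⟩ (h_edge.trans (zero_smul k _).symm)
  exact ⟨by simpa only [hb, zero_smul, add_zero] using h j, hb⟩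

theorem face_element_unisolvence_general [NoZeroDivisors k] [Nontrivial ι] (v : AffineBasis ι k V)
    {a : V} {b : k} {φ : ι → V →ₗ[k] k} (hφ₀ : ∀ i, φ i ≠ 0)
    (hφ : ∀ i j l, j ≠ i → l ≠ i → φ i (v j - v l) = 0)
    (h : ∀ i j, j ≠ i → φ i (a + b • v j) = 0) : a = 0 ∧ b = 0 :=
  eq_zero_and_eq_zero_of_forall_add_smul_eq_zero v.ind fun j ↦
    eq_zero_of_forall_face_conormal_eq_zero v hφ₀ hφ j fun i hij ↦ h i j hij.symm

end Simplex

theorem dotProductEquiv_apply_eq_dot3 (x y : Fin 3 → ℝ) :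
    dotProductEquiv ℝ (Fin 3) x y = dot3 x y := rfl

theorem dot3_comm (x y : Fin 3 → ℝ) : dot3 x y = dot3 y x :=
  dotProduct_comm x y

/-- Unisolvence of the lowest-order face (Raviart–Thomas–Nedelec) element on a
tetrahedron: if `p(x) = a + b • x` has vanishing normal component on each of the
four face planes of a nondegenerate tetrahedron, then `p = 0`. -/
theorem face_element_unisolvence
    (v : Fin 4 → Fin 3 → ℝ) (hv : AffineIndependent ℝ v)
    (a : Fin 3 → ℝ) (b : ℝ)
    (n : Fin 4 → Fin 3 → ℝ)
    (hn : ∀ i, n i ≠ 0)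
    (hperp : ∀ i j k : Fin 4, j ≠ i → k ≠ i → dot3 (n i) (v j - v k) = 0)
    (h : ∀ i : Fin 4, ∀ x ∈ affineSpan ℝ (v '' {j | j ≠ i}),
      dot3 (a + b • x) (n i) = 0) :
    a = 0 ∧ b = 0 := by
  have h_span : affineSpan ℝ (Set.range v) = ⊤ :=
    hv.affineSpan_eq_top_iff_card_eq_finrank_add_one.mpr (by simp)
  refine face_element_unisolvence_general ⟨v, hv, h_span⟩
    (φ := fun i ↦ dotProductEquiv ℝ (Fin 3) (n i))
    (fun i ↦ (dotProductEquiv ℝ (Fin 3)).map_ne_zero_iff.mpr (hn i)) hperp fun i j hji ↦ ?_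
  rw [dotProductEquiv_apply_eq_dot3, dot3_comm]
  exact h i (v j) (subset_affineSpan ℝ _ (Set.mem_image_of_mem v hji))
end

section
/- Let v₀, v₁, v₂, v₃ ∈ ℝ³ be affinely independent (the vertices of a nondegenerate tetrahedron T). Let p(x) = a + b × x with a, b ∈ ℝ³, where × denotes the cross product. If for each of the six edges e of T, with endpoints vᵢ, vⱼ, one has p(x)·(vⱼ − vᵢ) = 0 for all x on the segment from vᵢ to vⱼ, then p = 0 (i.e., a = 0 and b = 0). -/
/-!
Write `p x = a + b × x`. Since `(b × d) · d = 0`, the component of `p` along an edge is constant on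
that edge, so it vanishes at the vertices. At each vertex `p` is therefore orthogonal to the edges
leaving that vertex; these span the space, so `p` vanishes at every vertex. As `p` is affine and the
vertices affinely span the space, `p` vanishes identically, and its linear part `b × ·` determines
`b`.
-/

section

open scoped Matrix

theorem linearMap_eq_zero_of_affineSpan_range_eq_top {R V M ι : Type*} [Ring R] [AddCommGroup V]
    [Module R V] [AddCommGroup M] [Module R M] {v : ι → V} (hv : affineSpan R (Set.range v) = ⊤)
    {f : V →ₗ[R] M} (i : ι) (hf : ∀ j, f (v j - v i) = 0) : f = 0 := by
  have edges_span : Submodule.span R (Set.range fun j => v j - v i) = ⊤ := by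
    simpa only [vectorSpan_range_eq_span_range_vsub_right R v i, vsub_eq_sub] using
      AffineSubspace.vectorSpan_eq_top_of_affineSpan_eq_top R V V hv
  exact LinearMap.ext_on_range edges_span hf

variable {R ι : Type*} [CommRing R]

theorem eq_zero_of_forall_dotProduct_sub_eq_zero {n : Type*} [Fintype n] {v : ι → n → R}
    (hv : affineSpan R (Set.range v) = ⊤) {w : n → R} (i : ι)
    (hw : ∀ j, w ⬝ᵥ (v j - v i) = 0) : w = 0 :=
  dotProduct_eq_zero w <| DFunLike.congr_fun <|
    linearMap_eq_zero_of_affineSpan_range_eq_top hv (f := dotProductBilin R R w) i hw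

theorem crossProduct_injective :
    Function.Injective (crossProduct : (Fin 3 → R) →ₗ[R] (Fin 3 → R) →ₗ[R] (Fin 3 → R)) := by
  refine (injective_iff_map_eq_zero _).2 fun b hb => ?_
  have cross_e₀ : b ⨯₃ ![1, 0, 0] = 0 := by rw [hb, LinearMap.zero_apply]
  have cross_e₁ : b ⨯₃ ![0, 1, 0] = 0 := by rw [hb, LinearMap.zero_apply]
  obtain ⟨hb₂, hb₁⟩ : b 2 = 0 ∧ b 1 = 0 := by simpa [cross_apply] using cross_e₀
  have hb₀ : b 0 = 0 := by simpa [cross_apply, hb₂] using cross_e₁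
  ext i
  fin_cases i <;> assumption

theorem add_cross_dotProduct_sub_of_mem_affineSpan_pair (a b : Fin 3 → R) {p q x : Fin 3 → R}
    (hx : x ∈ line[R, p, q]) :
    (a + b ⨯₃ x) ⬝ᵥ (q - p) = (a + b ⨯₃ p) ⬝ᵥ (q - p) := by
  obtain ⟨t, rfl⟩ := mem_affineSpan_pair_iff_exists_lineMap_eq.1 hx
  have cross_orthogonal : b ⨯₃ (q - p) ⬝ᵥ (q - p) = 0 := by
    rw [dotProduct_comm, dot_cross_self]
  simp only [AffineMap.lineMap_apply_module', map_add, map_smul, add_dotProduct, smul_dotProduct,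
    cross_orthogonal, smul_zero, zero_add]

theorem eq_zero_of_forall_add_cross_eq_zero {v : ι → Fin 3 → R}
    (hv : affineSpan R (Set.range v) = ⊤) {a b : Fin 3 → R} (h : ∀ i, a + b ⨯₃ v i = 0) :
    a = 0 ∧ b = 0 := by
  obtain ⟨_, i, rfl⟩ := AffineSubspace.nonempty_of_affineSpan_eq_top R _ _ hv
  have cross_edge : ∀ j, b ⨯₃ (v j - v i) = 0 := fun j => by
    rw [map_sub, sub_eq_zero]
    exact add_left_cancel ((h j).trans (h i).symm)
  have cross_eq_zero : crossProduct b = 0 :=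
    linearMap_eq_zero_of_affineSpan_range_eq_top hv i cross_edge
  refine ⟨?_, crossProduct_injective (cross_eq_zero.trans (map_zero _).symm)⟩
  simpa only [cross_eq_zero, LinearMap.zero_apply, add_zero] using h i

theorem edge_element_unisolvence_general {v : ι → Fin 3 → R}
    (hv : affineSpan R (Set.range v) = ⊤) {a b : Fin 3 → R}
    (h : ∀ i j, i ≠ j → ∃ x ∈ line[R, v i, v j], (a + b ⨯₃ x) ⬝ᵥ (v j - v i) = 0) :
    a = 0 ∧ b = 0 := by
  refine eq_zero_of_forall_add_cross_eq_zero hv fun i =>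
    eq_zero_of_forall_dotProduct_sub_eq_zero hv i fun j => ?_
  obtain rfl | hij := eq_or_ne i j
  · rw [sub_self, dotProduct_zero]
  · obtain ⟨x, hx, tangential_eq_zero⟩ := h i j hij
    rwa [← add_cross_dotProduct_sub_of_mem_affineSpan_pair a b hx]

end

/-- Unisolvence of the lowest-order edge (Nedelec) element on a tetrahedron:
if `p(x) = a + b × x` has vanishing tangential component on each of the six
edges of a nondegenerate tetrahedron, then `p = 0`. -/
theorem edge_element_unisolvence
    (v : Fin 4 → Fin 3 → ℝ) (hv : AffineIndependent ℝ v)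
    (a b : Fin 3 → ℝ)
    (h : ∀ i j : Fin 4, i ≠ j → ∀ x ∈ segment ℝ (v i) (v j),
      dot3 (a + crossProduct b x) (v j - v i) = 0) :
    a = 0 ∧ b = 0 := by
  have vertices_span : affineSpan ℝ (Set.range v) = ⊤ :=
    hv.affineSpan_eq_top_iff_card_eq_finrank_add_one.2 (by simp)
  exact edge_element_unisolvence_general vertices_span fun i j hij =>
    ⟨v i, left_mem_affineSpan_pair ℝ _ _, h i j hij _ (left_mem_segment ℝ _ _)⟩
end

section
/- The set of vector fields {x ↦ a(x) + b(x) × x : a, b ∈ P₁(ℝ³,ℝ³)}, where P₁(ℝ³,ℝ³) denotes polynomial vector fields of total degree at most 1 and × denotes the cross product, is a real vector subspace of the space P₂(ℝ³,ℝ³) of polynomial vector fields of degree at most 2, and its dimension is 20. -/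
/-- `PolyVF3 p` : vector fields on `ℝ³` whose components are polynomial functions of
total degree at most `p`, i.e. `P_p(ℝ³, ℝ³)`. -/
def PolyVF3 (p : ℕ) : Set ((Fin 3 → ℝ) → Fin 3 → ℝ) :=
  { f | ∃ q : Fin 3 → MvPolynomial (Fin 3) ℝ,
      (∀ i, (q i).totalDegree ≤ p) ∧ ∀ x i, f x i = MvPolynomial.eval x (q i) }

/-!
An affine field is `x ↦ c + A x`, and in `b(x) × x` the constant part of `b` contributes a linear
field, which can be absorbed into `a`. So the shape functions are the fields
`x ↦ c + A x + (B x) × x` with `c ∈ ℝ³` and `A, B ∈ ℝ³ˣ³`, a family with `3 + 9 + 9 = 21`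
parameters. If such a field vanishes, then so do its homogeneous parts, i.e. `c = 0`, `A = 0` and
`(B x) × x = 0` for all `x`. The last condition says that every vector is an eigenvector of `B`,
i.e. that `B` is scalar, so the parametrisation has a one-dimensional kernel.
-/

open MvPolynomial
open scoped Matrix

section DegreeOne

variable {σ R : Type*} [CommSemiring R]

theorem finsupp_eq_zero_or_eq_single_of_sum_le_one {m : σ →₀ ℕ} (hm : (m.sum fun _ e => e) ≤ 1) :
    m = 0 ∨ ∃ j, m = Finsupp.single j 1 := by
  rcases Nat.le_one_iff_eq_zero_or_eq_one.mp hm with h | h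
  · exact .inl ((Finsupp.degree_eq_zero_iff m).mp h)
  · exact .inr ((Finsupp.sum_eq_one_iff m).mp h)

theorem eq_C_add_sum_monomial_of_totalDegree_le_one [Fintype σ] {p : MvPolynomial σ R}
    (hp : p.totalDegree ≤ 1) :
    p = C (p.coeff 0) + ∑ j, monomial (Finsupp.single j 1) (p.coeff (Finsupp.single j 1)) := by
  classical
  ext m
  by_cases hm : m = 0 ∨ ∃ j, m = Finsupp.single j 1
  · rcases hm with rfl | ⟨j, rfl⟩
    · simp [coeff_sum, coeff_monomial]
    · simp [coeff_sum, coeff_monomial, coeff_C, Finsupp.single_left_inj, eq_comm]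
  · have hcoeff : p.coeff m = 0 := by
      by_contra h
      exact hm (finsupp_eq_zero_or_eq_single_of_sum_le_one
        ((le_totalDegree (mem_support_iff.mpr h)).trans hp))
    push Not at hm
    simp [coeff_sum, coeff_monomial, coeff_C, hcoeff, hm.1.symm, fun j => (hm.2 j).symm]

end DegreeOne

section PolynomialCross

variable {σ R : Type*} [CommRing R]

theorem totalDegree_cross_le {p q : Fin 3 → MvPolynomial σ R} {m n : ℕ}
    (hp : ∀ i, (p i).totalDegree ≤ m) (hq : ∀ i, (q i).totalDegree ≤ n) (i : Fin 3) :
    ((p ⨯₃ q) i).totalDegree ≤ m + n := by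
  have hmul (j k : Fin 3) : (p j * q k).totalDegree ≤ m + n :=
    (totalDegree_mul _ _).trans (add_le_add (hp j) (hq k))
  have hminor (j k : Fin 3) : (p j * q k - p k * q j).totalDegree ≤ m + n :=
    (totalDegree_sub _ _).trans (max_le (hmul j k) (hmul k j))
  fin_cases i <;> exact hminor _ _

theorem eval_cross (p q : Fin 3 → MvPolynomial σ R) (x : σ → R) (i : Fin 3) :
    eval x ((p ⨯₃ q) i) = ((fun j => eval x (p j)) ⨯₃ fun j => eval x (q j)) i := by
  fin_cases i <;> simp [cross_apply]

end PolynomialCross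

section PolynomialFields

variable {m n : ℕ} {a b : (Fin 3 → ℝ) → Fin 3 → ℝ}

theorem polyVF3_mono (hmn : m ≤ n) : PolyVF3 m ⊆ PolyVF3 n := by
  rintro a ⟨p, hp, ha⟩
  exact ⟨p, fun i => (hp i).trans hmn, ha⟩

theorem add_mem_polyVF3 (ha : a ∈ PolyVF3 n) (hb : b ∈ PolyVF3 n) :
    (fun x => a x + b x) ∈ PolyVF3 n := by
  obtain ⟨p, hp, ha⟩ := ha
  obtain ⟨q, hq, hb⟩ := hb
  exact ⟨p + q, fun i => (totalDegree_add _ _).trans (max_le (hp i) (hq i)),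
    fun x i => by simp [ha, hb]⟩

theorem cross_mem_polyVF3 (ha : a ∈ PolyVF3 m) (hb : b ∈ PolyVF3 n) :
    (fun x => a x ⨯₃ b x) ∈ PolyVF3 (m + n) := by
  obtain ⟨p, hp, ha⟩ := ha
  obtain ⟨q, hq, hb⟩ := hb
  refine ⟨p ⨯₃ q, totalDegree_cross_le hp hq, fun x i => ?_⟩
  rw [eval_cross, ← funext (ha x), ← funext (hb x)]

theorem mem_polyVF3_one_iff :
    a ∈ PolyVF3 1 ↔
      ∃ (c : Fin 3 → ℝ) (A : Matrix (Fin 3) (Fin 3) ℝ), a = fun x => c + A *ᵥ x := by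
  constructor
  · rintro ⟨q, hq, ha⟩
    let A : Matrix (Fin 3) (Fin 3) ℝ := .of fun i j => (q i).coeff (Finsupp.single j 1)
    have hqA (i : Fin 3) : q i = C ((q i).coeff 0) + A.toMvPolynomial i :=
      eq_C_add_sum_monomial_of_totalDegree_le_one (hq i)
    refine ⟨fun i => (q i).coeff 0, A, ?_⟩
    ext x i
    rw [ha, hqA, map_add, eval_C, A.toMvPolynomial_eval_eq_apply, Pi.add_apply]
  · rintro ⟨c, A, rfl⟩
    refine ⟨fun i => C (c i) + A.toMvPolynomial i, fun i => ?_, fun x i => ?_⟩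
    · exact (totalDegree_add _ _).trans (max_le (by simp) (A.toMvPolynomial_totalDegree_le i))
    · simp [A.toMvPolynomial_eval_eq_apply]

theorem id_mem_polyVF3_one : (fun x => x) ∈ PolyVF3 1 :=
  mem_polyVF3_one_iff.mpr ⟨0, 1, by simp⟩

theorem add_cross_mem_polyVF3 (ha : a ∈ PolyVF3 n) (hb : b ∈ PolyVF3 n) :
    (fun x => a x + b x ⨯₃ x) ∈ PolyVF3 (n + 1) :=
  add_mem_polyVF3 (polyVF3_mono n.le_succ ha) (cross_mem_polyVF3 hb id_mem_polyVF3_one)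

end PolynomialFields

theorem eq_zero_of_forall_add_linear_add_quadratic_eq_zero {K V W : Type*} [Field K]
    [NeZero (2 : K)] [AddCommGroup V] [Module K V] [AddCommGroup W] [Module K W]
    {c : W} {L : V →ₗ[K] W} {Q : QuadraticMap K V W} (h : ∀ x, c + L x + Q x = 0) :
    c = 0 ∧ L = 0 ∧ Q = 0 := by
  have hc : c = 0 := by simpa using h 0
  subst hc
  have hL (x : V) : L x = 0 := by
    have hsum : L x + Q x = 0 := by simpa using h x
    have hdiff : -L x + Q x = 0 := by simpa using h (-x)
    have htwo : (2 : K) • L x = 0 := by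
      calc (2 : K) • L x = (L x + Q x) - (-L x + Q x) := by rw [two_smul]; abel
        _ = 0 := by rw [hsum, hdiff, sub_zero]
    exact (smul_eq_zero_iff_right two_ne_zero).mp htwo
  exact ⟨rfl, LinearMap.ext hL, QuadraticMap.ext fun x => by simpa [hL] using h x⟩

section ShapeFunctions

/-- The field `x ↦ c + A x + (B x) × x` as a linear function of the parameters `(c, A, B)`. A
constant term `d` of the second factor is left out, since `d × x` is already of the form `A x`. -/
def shapeField (K : Type*) [CommRing K] :
    (Fin 3 → K) × Matrix (Fin 3) (Fin 3) K × Matrix (Fin 3) (Fin 3) K →ₗ[K]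
      (Fin 3 → K) → Fin 3 → K where
  toFun p x := p.1 + p.2.1 *ᵥ x + (p.2.2 *ᵥ x) ⨯₃ x
  map_add' p q := by
    ext1 x
    simp only [Prod.fst_add, Prod.snd_add, Matrix.add_mulVec, map_add, LinearMap.add_apply,
      Pi.add_apply]
    abel
  map_smul' r p := by
    ext1 x
    simp [Matrix.smul_mulVec]

theorem shapeField_apply {K : Type*} [CommRing K] (c : Fin 3 → K)
    (A B : Matrix (Fin 3) (Fin 3) K) (x : Fin 3 → K) :
    shapeField K (c, A, B) x = c + A *ᵥ x + (B *ᵥ x) ⨯₃ x :=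
  rfl

theorem range_shapeField :
    (LinearMap.range (shapeField ℝ) : Set ((Fin 3 → ℝ) → Fin 3 → ℝ)) =
      {f | ∃ a ∈ PolyVF3 1, ∃ b ∈ PolyVF3 1, f = fun x => a x + b x ⨯₃ x} := by
  ext f
  constructor
  · rintro ⟨⟨c, A, B⟩, rfl⟩
    exact ⟨fun x => c + A *ᵥ x, mem_polyVF3_one_iff.mpr ⟨c, A, rfl⟩,
      fun x => B *ᵥ x, mem_polyVF3_one_iff.mpr ⟨0, B, by simp⟩, rfl⟩
  · rintro ⟨a, ha, b, hb, rfl⟩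
    obtain ⟨c, A, rfl⟩ := mem_polyVF3_one_iff.mp ha
    obtain ⟨d, B, rfl⟩ := mem_polyVF3_one_iff.mp hb
    refine ⟨(c, A + LinearMap.toMatrix' (crossProduct d), B), ?_⟩
    ext1 x
    simp only [shapeField_apply, Matrix.add_mulVec, LinearMap.toMatrix'_mulVec, map_add,
      LinearMap.add_apply, add_assoc]

variable {K : Type*} [Field K]

theorem forall_mulVec_cross_self_eq_zero_iff {B : Matrix (Fin 3) (Fin 3) K} :
    (∀ x, (B *ᵥ x) ⨯₃ x = 0) ↔ ∃ r : K, B = r • 1 := by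
  constructor
  · intro h
    have hdep (x : Fin 3 → K) : ¬LinearIndependent K ![x, Matrix.toLin' B x] := by
      rw [← crossProduct_ne_zero_iff_linearIndependent, not_not, Matrix.toLin'_apply,
        ← cross_anticomm, h, neg_zero]
    obtain ⟨r, hr⟩ := LinearMap.exists_eq_smul_id_of_forall_notLinearIndependent hdep
    exact ⟨r, Matrix.toLin'.injective (by simpa [Module.End.one_eq_id] using hr)⟩
  · rintro ⟨r, rfl⟩ x
    simp [Matrix.smul_mulVec]

variable [NeZero (2 : K)]

theorem shapeField_eq_zero_iff {c : Fin 3 → K} {A B : Matrix (Fin 3) (Fin 3) K} :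
    shapeField K (c, A, B) = 0 ↔ c = 0 ∧ A = 0 ∧ ∃ r : K, B = r • 1 := by
  rw [← forall_mulVec_cross_self_eq_zero_iff]
  constructor
  · intro h
    let Q : QuadraticMap K (Fin 3 → K) (Fin 3 → K) :=
      LinearMap.BilinMap.toQuadraticMap (crossProduct ∘ₗ Matrix.toLin' B)
    have hsum (x : Fin 3 → K) : c + Matrix.toLin' A x + Q x = 0 := congrFun h x
    obtain ⟨hc, hA, hQ⟩ := eq_zero_of_forall_add_linear_add_quadratic_eq_zero hsum
    exact ⟨hc, Matrix.toLin'.map_eq_zero_iff.mp hA, fun x => DFunLike.congr_fun hQ x⟩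
  · rintro ⟨rfl, rfl, hB⟩
    ext1 x
    simp [shapeField_apply, hB]

theorem ker_shapeField : LinearMap.ker (shapeField K) = K ∙ (0, 0, 1) := by
  ext ⟨c, A, B⟩
  simp only [LinearMap.mem_ker, shapeField_eq_zero_iff, Submodule.mem_span_singleton,
    Prod.smul_mk, smul_zero, Prod.mk.injEq]
  grind

theorem finrank_range_shapeField : Module.finrank K (LinearMap.range (shapeField K)) = 20 := by
  have hrank_nullity := (shapeField K).finrank_range_add_finrank_ker
  have hker : Module.finrank K (LinearMap.ker (shapeField K)) = 1 := by
    rw [ker_shapeField]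
    exact finrank_span_singleton (by simp)
  have hdomain : Module.finrank K
      ((Fin 3 → K) × Matrix (Fin 3) (Fin 3) K × Matrix (Fin 3) (Fin 3) K) = 21 := by
    simp [Module.finrank_prod, Module.finrank_matrix]
  lia

end ShapeFunctions

/-- The set `{x ↦ a(x) + b(x) × x : a, b ∈ P₁(ℝ³,ℝ³)}` is a real subspace of
`P₂(ℝ³,ℝ³)` of dimension `20` (the shape functions of the second lowest order
edge element). -/
theorem edge_element_shape_space_dim :
    ∃ S : Submodule ℝ ((Fin 3 → ℝ) → Fin 3 → ℝ),
      (S : Set ((Fin 3 → ℝ) → Fin 3 → ℝ)) =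
        { f | ∃ a ∈ PolyVF3 1, ∃ b ∈ PolyVF3 1, f = fun x => a x + crossProduct (b x) x } ∧
      (S : Set ((Fin 3 → ℝ) → Fin 3 → ℝ)) ⊆ PolyVF3 2 ∧
      Module.finrank ℝ S = 20 := by
  refine ⟨LinearMap.range (shapeField ℝ), range_shapeField, ?_, finrank_range_shapeField⟩
  rw [range_shapeField]
  rintro f ⟨a, ha, b, hb, rfl⟩
  exact add_cross_mem_polyVF3 ha hb
end

section
/- Let 𝕊 denote the space of symmetric 2×2 real matrices, and for a matrix field τ : ℝ² → 𝕊 let div τ : ℝ² → ℝ² be the row-wise divergence, (div τ)ᵢ = ∂₁τᵢ₁ + ∂₂τᵢ₂. Then the set S := {τ ∈ P₃(ℝ²,𝕊) : div τ ∈ P₁(ℝ²,ℝ²)} is a real vector space of dimension 24, where P_p denotes polynomial functions of total degree at most p. -/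
/-- The `i`-th partial derivative of a scalar function on `ℝ²`. -/
noncomputable def pd2 (i : Fin 2) (f : (Fin 2 → ℝ) → ℝ) (x : Fin 2 → ℝ) : ℝ :=
  fderiv ℝ f x (Pi.single i 1)

/-- The row-wise divergence of a matrix field on `ℝ²`: `(div τ)ᵢ = ∂₁τᵢ₁ + ∂₂τᵢ₂`. -/
noncomputable def divRow (τ : (Fin 2 → ℝ) → Matrix (Fin 2) (Fin 2) ℝ)
    (x : Fin 2 → ℝ) (i : Fin 2) : ℝ :=
  pd2 0 (fun y => τ y i 0) x + pd2 1 (fun y => τ y i 1) x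

/-- `PolyMat2 p` : matrix fields on `ℝ²` whose entries are polynomial functions of
total degree at most `p`. -/
def PolyMat2 (p : ℕ) : Set ((Fin 2 → ℝ) → Matrix (Fin 2) (Fin 2) ℝ) :=
  { τ | ∃ q : Matrix (Fin 2) (Fin 2) (MvPolynomial (Fin 2) ℝ),
      (∀ i j, (q i j).totalDegree ≤ p) ∧ ∀ x i j, τ x i j = MvPolynomial.eval x (q i j) }

/-- `PolyVF2 p` : vector fields on `ℝ²` whose components are polynomial functions of
total degree at most `p`, i.e. `P_p(ℝ², ℝ²)`. -/
def PolyVF2 (p : ℕ) : Set ((Fin 2 → ℝ) → Fin 2 → ℝ) :=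
  { f | ∃ q : Fin 2 → MvPolynomial (Fin 2) ℝ,
      (∀ i, (q i).totalDegree ≤ p) ∧ ∀ x i, f x i = MvPolynomial.eval x (q i) }

/-!
The row-wise divergence maps symmetric matrix fields of degree at most `p + 1` onto vector fields
of degree at most `p`: it suffices to use diagonal fields, whose entries are antiderivatives of the
components of the target. Hence requiring the divergence to have degree at most `r ≤ p` costs
exactly `dim P_p(ℝ²,ℝ²) - dim P_r(ℝ²,ℝ²)` dimensions. In the case `p = 2`, `r = 1` this gives
`3 · 10 - (12 - 6) = 24`.
-/

open MvPolynomial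
open Module (finrank)

section LinearAlgebra

variable {K V W : Type*} [DivisionRing K] [AddCommGroup V] [Module K V] [AddCommGroup W]
  [Module K W]

theorem finrank_map_add_finrank_inf_ker (f : V →ₗ[K] W) (A : Submodule K V)
    [FiniteDimensional K A] :
    finrank K (A.map f) + finrank K ↥(A ⊓ f.ker) = finrank K A := by
  have hker : finrank K (f.domRestrict A).ker = finrank K ↥(A ⊓ f.ker) := by
    rw [LinearMap.ker_domRestrict, ← Submodule.finrank_map_subtype_eq,
      Submodule.map_comap_subtype]
  rw [← LinearMap.range_domRestrict, ← hker, LinearMap.finrank_range_add_finrank_ker]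

theorem finrank_inf_comap_add_finrank_map (f : V →ₗ[K] W) (A : Submodule K V)
    [FiniteDimensional K A] {U : Submodule K W} (hU : U ≤ A.map f) :
    finrank K ↥(A ⊓ U.comap f) + finrank K (A.map f) = finrank K A + finrank K U := by
  have hmap : (A ⊓ U.comap f).map f = U := by
    rw [← Submodule.map_inf_eq_map_inf_comap, inf_eq_right.2 hU]
  have hker : A ⊓ U.comap f ⊓ f.ker = A ⊓ f.ker := by
    rw [inf_assoc, inf_eq_right.2 (LinearMap.ker_le_comap f)]
  have hA := finrank_map_add_finrank_inf_ker f A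
  have hAU := finrank_map_add_finrank_inf_ker f (A ⊓ U.comap f)
  rw [hmap, hker] at hAU
  lia

theorem pi_univ_const_eq_range_compLeft (ι : Type*) (A : Submodule K V) :
    (Submodule.pi Set.univ fun _ : ι ↦ A) = (A.subtype.compLeft ι).range := by
  rw [LinearMap.range_compLeft, Submodule.range_subtype]

instance finiteDimensional_pi_univ_const {ι : Type*} [Finite ι] (A : Submodule K V)
    [FiniteDimensional K A] : FiniteDimensional K (Submodule.pi Set.univ fun _ : ι ↦ A) := by
  rw [pi_univ_const_eq_range_compLeft]
  infer_instance

theorem finrank_pi_univ_const {ι : Type*} [Fintype ι] (A : Submodule K V)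
    [FiniteDimensional K A] :
    finrank K (Submodule.pi Set.univ fun _ : ι ↦ A) = Fintype.card ι * finrank K A := by
  rw [pi_univ_const_eq_range_compLeft,
    LinearMap.finrank_range_of_inj A.injective_subtype.comp_left, Module.finrank_pi_fintype,
    Finset.sum_const, Finset.card_univ, smul_eq_mul]

end LinearAlgebra

section Dimension

/-- Homogenization of exponents: an exponent of degree at most `m` becomes an exponent of degree
exactly `m` by assigning the defect to an additional variable `none`. -/
noncomputable def finsuppSumLeEquivOption (σ : Type*) (m : ℕ) :
    {n : σ →₀ ℕ // (n.sum fun _ ↦ id) ≤ m} ≃ {n : Option σ →₀ ℕ // (n.sum fun _ ↦ id) = m} where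
  toFun n := ⟨n.1.optionElim (m - n.1.sum fun _ ↦ id), by
    simp [Finsupp.sum_option_index, n.2]⟩
  invFun n := ⟨n.1.some, by simp [← n.2, Finsupp.sum_option_index]⟩
  left_inv n := by simp
  right_inv n := by
    ext1
    simp [← n.2, Finsupp.sum_option_index]

theorem card_finsupp_sum_le (σ : Type*) [Fintype σ] (m : ℕ) :
    Nat.card {n : σ →₀ ℕ // (n.sum fun _ ↦ id) ≤ m} = (Fintype.card σ + m).choose m := by
  classical
  rw [Nat.card_congr ((finsuppSumLeEquivOption σ m).trans (Sym.equivNatSum (Option σ) m).symm),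
    Nat.card_eq_fintype_card, Sym.card_sym_eq_choose, Fintype.card_option,
    Nat.add_right_comm, Nat.add_sub_cancel]

theorem finrank_restrictTotalDegree (σ R : Type*) [Fintype σ] [CommRing R] [Nontrivial R]
    (m : ℕ) : finrank R (restrictTotalDegree σ R m) = (Fintype.card σ + m).choose m :=
  (Module.finrank_eq_nat_card_basis (basisRestrictSupport R _)).trans (card_finsupp_sum_le σ m)

end Dimension

section PartialDerivative

variable {σ : Type*}

theorem totalDegree_pderiv_le {R : Type*} [CommSemiring R] (i : σ) (q : MvPolynomial σ R) :
    (pderiv i q).totalDegree ≤ q.totalDegree - 1 := by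
  refine Finset.sup_le fun m hm ↦ ?_
  have hmem : m + Finsupp.single i 1 ∈ q.support := by
    rw [mem_support_iff, coeff_pderiv] at hm
    exact mem_support_iff.2 (left_ne_zero_of_mul hm)
  have hle := le_totalDegree hmem
  rw [Finsupp.sum_add_index' (by simp) (by simp), Finsupp.sum_single_index rfl] at hle
  exact Nat.le_sub_of_add_le hle

theorem pderiv_monomial_add_single_one {K : Type*} [Field K] [CharZero K] (i : σ) (m : σ →₀ ℕ)
    (a : K) : pderiv i (monomial (m + Finsupp.single i 1) (a / (m i + 1))) = monomial m a := by
  have hne : (m i + 1 : K) ≠ 0 := Nat.cast_add_one_ne_zero _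
  simp [pderiv_monomial, hne]

theorem map_pderiv_restrictTotalDegree_succ {K : Type*} [Field K] [CharZero K] (i : σ) (p : ℕ) :
    (restrictTotalDegree σ K (p + 1)).map (pderiv i).toLinearMap = restrictTotalDegree σ K p := by
  apply le_antisymm
  · rintro _ ⟨q, hq, rfl⟩
    rw [SetLike.mem_coe, mem_restrictTotalDegree] at hq
    rw [mem_restrictTotalDegree]
    exact (totalDegree_pderiv_le i q).trans (Nat.sub_le_of_le_add hq)
  · rw [restrictTotalDegree, restrictSupport_eq_span, Submodule.span_le]
    rintro _ ⟨m, hm, rfl⟩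
    refine ⟨_, ?_, pderiv_monomial_add_single_one i m 1⟩
    refine (monomial_mem_restrictSupport K).2 (Or.inl ?_)
    rw [Set.mem_ofPred_eq] at hm ⊢
    rw [Finsupp.sum_add_index' (by simp) (by simp), Finsupp.sum_single_index rfl]
    exact Nat.succ_le_succ hm

variable {𝕜 : Type*} [NontriviallyNormedField 𝕜] [Finite σ]

theorem differentiable_eval (q : MvPolynomial σ 𝕜) : Differentiable 𝕜 fun x ↦ eval x q := by
  have := Fintype.ofFinite σ
  exact fun x ↦
    (AnalyticOnNhd.eval_continuousLinearMap (.id 𝕜 (σ → 𝕜)) q x trivial).differentiableAt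

theorem fderiv_eval_single [DecidableEq σ] (q : MvPolynomial σ 𝕜) (x : σ → 𝕜) (i : σ) :
    fderiv 𝕜 (fun y ↦ eval y q) x (Pi.single i 1) = eval x (pderiv i q) := by
  have := Fintype.ofFinite σ
  induction q using MvPolynomial.induction_on with
  | C a => simp
  | add q₁ q₂ h₁ h₂ =>
    simp [fderiv_fun_add (differentiable_eval q₁ x) (differentiable_eval q₂ x), h₁, h₂]
  | mul_X q j h =>
    have hX : HasFDerivAt (fun y : σ → 𝕜 ↦ y j) (ContinuousLinearMap.proj j) x :=
      hasFDerivAt_apply (𝕜 := 𝕜) j x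
    simp [fderiv_fun_mul (differentiable_eval q x) hX.differentiableAt, hX.fderiv, h, pderiv_X,
      Pi.single_apply, apply_ite (eval x)]

end PartialDerivative

section SymmetricFields

variable {ι σ R : Type*} [CommSemiring R]

/-- `P_p(R^σ, R^ι)`: families of polynomials of total degree at most `p` in the variables `σ`,
indexed by `ι`. -/
noncomputable abbrev polyTuples (ι σ R : Type*) [CommSemiring R] (p : ℕ) :
    Submodule R (ι → MvPolynomial σ R) :=
  Submodule.pi Set.univ fun _ ↦ restrictTotalDegree σ R p

theorem mem_polyTuples {p : ℕ} {q : ι → MvPolynomial σ R} :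
    q ∈ polyTuples ι σ R p ↔ ∀ i, (q i).totalDegree ≤ p := by
  simp [Submodule.mem_pi, mem_restrictTotalDegree]

theorem polyTuples_mono {r p : ℕ} (hrp : r ≤ p) :
    polyTuples ι σ R r ≤ polyTuples ι σ R p :=
  fun _ hq ↦ mem_polyTuples.2 fun i ↦ (mem_polyTuples.1 hq i).trans hrp

theorem finrank_polyTuples {K : Type*} [Field K] [Fintype ι] [Fintype σ] (p : ℕ) :
    finrank K (polyTuples ι σ K p) = Fintype.card ι * (Fintype.card σ + p).choose p := by
  rw [finrank_pi_univ_const, finrank_restrictTotalDegree]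

/-- The entries of a symmetric matrix as a function of the unordered pair of indices. -/
def symmEntries {α : Type*} (M : Matrix σ σ α) (hM : M.IsSymm) : Sym2 σ → α :=
  Sym2.lift ⟨M, fun i j ↦ hM.apply j i⟩

@[simp]
theorem symmEntries_mk {α : Type*} (M : Matrix σ σ α) (hM : M.IsSymm) (i j : σ) :
    symmEntries M hM s(i, j) = M i j :=
  rfl

/-- The matrix field whose entries are the polynomial functions `q s(i, j)`. Indexing by unordered
pairs builds in the symmetry of the field. -/
noncomputable def symmField (σ R : Type*) [CommSemiring R] :
    (Sym2 σ → MvPolynomial σ R) →ₗ[R] (σ → R) → Matrix σ σ R where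
  toFun q x := Matrix.of fun i j ↦ eval x (q s(i, j))
  map_add' q q' := by ext; simp
  map_smul' c q := by ext; simp

@[simp]
theorem symmField_apply (q : Sym2 σ → MvPolynomial σ R) (x : σ → R) (i j : σ) :
    symmField σ R q x i j = eval x (q s(i, j)) :=
  rfl

theorem isSymm_symmField (q : Sym2 σ → MvPolynomial σ R) (x : σ → R) :
    (symmField σ R q x).IsSymm :=
  Matrix.IsSymm.ext fun i j ↦ by rw [symmField_apply, symmField_apply, Sym2.eq_swap]

theorem symmField_injective {D : Type*} [CommRing D] [IsDomain D] [Infinite D] :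
    Function.Injective (symmField σ D) := by
  intro q q' h
  funext e
  induction e with
  | _ i j => exact MvPolynomial.funext fun x ↦ congrFun₂ (congrFun h x) i j

theorem isSymm_of_forall_eval {D : Type*} [CommRing D] [IsDomain D] [Infinite D]
    {M : Matrix σ σ (MvPolynomial σ D)} (hM : ∀ x, (M.map (eval x)).IsSymm) : M.IsSymm :=
  Matrix.IsSymm.ext fun i j ↦ MvPolynomial.funext fun x ↦ (hM x).apply i j

variable [Fintype σ]

/-- The row-wise divergence of a symmetric matrix of polynomials, given by its entries. -/
noncomputable def symmDiv (σ R : Type*) [CommSemiring R] [Fintype σ] :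
    (Sym2 σ → MvPolynomial σ R) →ₗ[R] σ → MvPolynomial σ R :=
  LinearMap.pi fun i ↦ ∑ j, (pderiv j).toLinearMap ∘ₗ LinearMap.proj s(i, j)

theorem symmDiv_apply (q : Sym2 σ → MvPolynomial σ R) (i : σ) :
    symmDiv σ R q i = ∑ j, pderiv j (q s(i, j)) := by
  simp [symmDiv]

theorem symmDiv_symmEntries_diagonal [DecidableEq σ] (g : σ → MvPolynomial σ R) (i : σ) :
    symmDiv σ R (symmEntries (Matrix.diagonal g) (Matrix.isSymm_diagonal g)) i =
      pderiv i (g i) := by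
  simp [symmDiv_apply, Matrix.diagonal_apply, apply_ite (pderiv _)]

/-- The symmetric matrices of polynomials of degree at most `p`, given by their entries, whose
row-wise divergence has degree at most `r`. The Arnold–Winther space is the case of two variables
with `p = 3` and `r = 1`. -/
noncomputable def symmDivSpace (σ R : Type*) [CommSemiring R] [Fintype σ] (p r : ℕ) :
    Submodule R (Sym2 σ → MvPolynomial σ R) :=
  polyTuples (Sym2 σ) σ R p ⊓ (polyTuples σ σ R r).comap (symmDiv σ R)

variable {K : Type*} [Field K] [CharZero K]

theorem map_symmDiv_polyTuples_succ (p : ℕ) :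
    (polyTuples (Sym2 σ) σ K (p + 1)).map (symmDiv σ K) = polyTuples σ σ K p := by
  classical
  apply le_antisymm
  · rintro _ ⟨q, hq, rfl⟩ i -
    rw [symmDiv_apply]
    refine sum_mem fun j _ ↦ ?_
    rw [← map_pderiv_restrictTotalDegree_succ j]
    exact Submodule.mem_map_of_mem (hq _ trivial)
  · intro f hf
    have antideriv (i : σ) : ∃ g ∈ restrictTotalDegree σ K (p + 1), pderiv i g = f i := by
      have hfi := hf i trivial
      rwa [← map_pderiv_restrictTotalDegree_succ i] at hfi
    choose g hg hgf using antideriv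
    refine ⟨symmEntries (Matrix.diagonal g) (Matrix.isSymm_diagonal g), ?_, ?_⟩
    · rintro ⟨i, j⟩ -
      change Matrix.diagonal g i j ∈ _
      rw [Matrix.diagonal_apply]
      split_ifs
      exacts [hg i, zero_mem _]
    · funext i
      rw [symmDiv_symmEntries_diagonal, hgf]

theorem finrank_symmDivSpace_succ_add {p r : ℕ} (hrp : r ≤ p) :
    finrank K (symmDivSpace σ K (p + 1) r) + Fintype.card σ * (Fintype.card σ + p).choose p =
      (Fintype.card σ + 1).choose 2 * (Fintype.card σ + (p + 1)).choose (p + 1) +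
        Fintype.card σ * (Fintype.card σ + r).choose r := by
  classical
  have hmap := map_symmDiv_polyTuples_succ (σ := σ) (K := K) p
  have hdim := finrank_inf_comap_add_finrank_map (symmDiv σ K) (polyTuples (Sym2 σ) σ K (p + 1))
    ((polyTuples_mono hrp).trans_eq hmap.symm)
  rwa [hmap, finrank_polyTuples, finrank_polyTuples, finrank_polyTuples, Sym2.card] at hdim

end SymmetricFields

section PlanarFields

theorem forall_isSymm_and_mem_polyMat2_iff {p : ℕ}
    {τ : (Fin 2 → ℝ) → Matrix (Fin 2) (Fin 2) ℝ} :
    (∀ x, (τ x).IsSymm) ∧ τ ∈ PolyMat2 p ↔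
      ∃ q ∈ polyTuples (Sym2 (Fin 2)) (Fin 2) ℝ p, symmField (Fin 2) ℝ q = τ := by
  constructor
  · rintro ⟨hsymm, M, hdeg, hτ⟩
    have hM : M.IsSymm := isSymm_of_forall_eval fun x ↦ by
      have hτx : τ x = M.map (eval x) := Matrix.ext (hτ x)
      exact hτx ▸ hsymm x
    refine ⟨symmEntries M hM, mem_polyTuples.2 ?_, ?_⟩
    · rintro ⟨i, j⟩
      exact hdeg i j
    · ext x i j
      exact (hτ x i j).symm
  · rintro ⟨q, hq, rfl⟩
    exact ⟨isSymm_symmField q, fun i j ↦ q s(i, j), fun _ _ ↦ mem_polyTuples.1 hq _,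
      symmField_apply q⟩

theorem divRow_symmField (q : Sym2 (Fin 2) → MvPolynomial (Fin 2) ℝ) (x : Fin 2 → ℝ) (i : Fin 2) :
    divRow (symmField (Fin 2) ℝ q) x i = eval x (symmDiv (Fin 2) ℝ q i) := by
  simp only [divRow, pd2, symmField_apply, fderiv_eval_single, symmDiv_apply, Fin.sum_univ_two,
    map_add]

theorem eval_mem_polyVF2_iff {r : ℕ} {f : Fin 2 → MvPolynomial (Fin 2) ℝ} :
    (fun x i ↦ eval x (f i)) ∈ PolyVF2 r ↔ f ∈ polyTuples (Fin 2) (Fin 2) ℝ r := by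
  rw [mem_polyTuples]
  refine ⟨?_, fun hf ↦ ⟨f, hf, fun _ _ ↦ rfl⟩⟩
  rintro ⟨g, hg, hfg⟩ i
  rw [show f i = g i from MvPolynomial.funext fun x ↦ hfg x i]
  exact hg i

theorem coe_map_symmField_symmDivSpace (p r : ℕ) :
    ((symmDivSpace (Fin 2) ℝ p r).map (symmField (Fin 2) ℝ) :
        Set ((Fin 2 → ℝ) → Matrix (Fin 2) (Fin 2) ℝ)) =
      { τ | (∀ x, (τ x).IsSymm) ∧ τ ∈ PolyMat2 p ∧ (fun x i ↦ divRow τ x i) ∈ PolyVF2 r } := by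
  have hdiv (q : Sym2 (Fin 2) → MvPolynomial (Fin 2) ℝ) :
      (fun x i ↦ divRow (symmField (Fin 2) ℝ q) x i) ∈ PolyVF2 r ↔
        symmDiv (Fin 2) ℝ q ∈ polyTuples (Fin 2) (Fin 2) ℝ r := by
    simp only [divRow_symmField, eval_mem_polyVF2_iff]
  ext τ
  rw [Set.mem_ofPred_eq, ← and_assoc, forall_isSymm_and_mem_polyMat2_iff]
  constructor
  · rintro ⟨q, ⟨hq, hqdiv⟩, rfl⟩
    exact ⟨⟨q, hq, rfl⟩, (hdiv q).2 hqdiv⟩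
  · rintro ⟨⟨q, hq, rfl⟩, hqdiv⟩
    exact ⟨q, ⟨hq, (hdiv q).1 hqdiv⟩, rfl⟩

end PlanarFields

theorem arnold_winther_shape_space_dim_general {p r : ℕ} (hrp : r ≤ p) :
    ∃ S : Submodule ℝ ((Fin 2 → ℝ) → Matrix (Fin 2) (Fin 2) ℝ),
      (S : Set ((Fin 2 → ℝ) → Matrix (Fin 2) (Fin 2) ℝ)) =
        { τ | (∀ x, (τ x).IsSymm) ∧ τ ∈ PolyMat2 (p + 1) ∧
              (fun x i => divRow τ x i) ∈ PolyVF2 r } ∧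
      finrank ℝ S + 2 * (p + 2).choose 2 = 3 * (p + 3).choose 2 + 2 * (r + 2).choose 2 := by
  refine ⟨_, coe_map_symmField_symmDivSpace (p + 1) r, ?_⟩
  have hchoose (m : ℕ) : (2 + m).choose m = (m + 2).choose 2 := by
    rw [Nat.add_comm, Nat.choose_symm_add]
  have hdim := finrank_symmDivSpace_succ_add (σ := Fin 2) (K := ℝ) hrp
  rw [Fintype.card_fin, hchoose, hchoose, hchoose] at hdim
  rwa [← (Submodule.equivMapOfInjective _ symmField_injective _).finrank_eq]

/-- The Arnold–Winther shape function space
`S = {τ ∈ P₃(ℝ²,𝕊) : div τ ∈ P₁(ℝ²,ℝ²)}` (symmetric-matrix-valued cubic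
polynomial fields with linear row-wise divergence) is a real vector space of
dimension `24`. -/
theorem arnold_winther_shape_space_dim :
    ∃ S : Submodule ℝ ((Fin 2 → ℝ) → Matrix (Fin 2) (Fin 2) ℝ),
      (S : Set ((Fin 2 → ℝ) → Matrix (Fin 2) (Fin 2) ℝ)) =
        { τ | (∀ x, (τ x).IsSymm) ∧ τ ∈ PolyMat2 3 ∧
              (fun x i => divRow τ x i) ∈ PolyVF2 1 } ∧
      Module.finrank ℝ S = 24 := by
  obtain ⟨S, hS, hdim⟩ := arnold_winther_shape_space_dim_general (p := 2) (r := 1) one_le_two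
  exact ⟨S, hS, by simpa [Nat.choose] using hdim⟩
end

section
/- Let v₀, v₁, v₂ ∈ ℝ² be affinely independent (the vertices of a nondegenerate triangle T), and let q : ℝ² → ℝ be a polynomial of total degree at most 5. If q(x) = 0 and the gradient ∇q(x) = 0 for every point x on each of the three closed edges of T (the segments [v₀,v₁], [v₁,v₂], [v₂,v₀]), then q is identically zero. -/
/-!
A generic line through a point off the facet hyperplanes of a simplex meets these hyperplanes in
pairwise distinct points. A polynomial vanishing to second order on the facets vanishes to second
order on the whole hyperplanes, so its restriction to such a line has one double root per facet.
For a triangle these are six roots counted with multiplicity, too many for a nonzero polynomial of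
degree at most five.
-/

open MvPolynomial

section Polynomial

open Polynomial

theorem eq_zero_of_natDegree_lt_two_mul_card_double_roots {R : Type*} [CommRing R] [IsDomain R]
    {p : R[X]} (s : Finset R) (hs : ∀ t ∈ s, p.IsRoot t ∧ p.derivative.IsRoot t)
    (hdeg : p.natDegree < 2 * s.card) : p = 0 := by
  by_contra hp
  have hroots : 2 • s.val ≤ p.roots := by
    classical
    refine Multiset.le_iff_count.2 fun t ↦ ?_
    rw [Multiset.count_nsmul, count_roots, Multiset.count_eq_of_nodup s.nodup]
    split_ifs with ht
    · exact (one_lt_rootMultiplicity_iff_isRoot hp).2 (hs t ht)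
    · exact Nat.zero_le _
  have hcard : 2 * s.card ≤ p.natDegree := by
    simpa using (Multiset.card_le_card hroots).trans p.card_roots'
  exact hdeg.not_ge hcard

end Polynomial

section Line

variable {σ R : Type*} [CommRing R]

/-- The restriction of a polynomial to the line through `x` with direction `d`, as a univariate
polynomial in the parameter `t` of the point `x + t • d`. -/
noncomputable def restrictLine (x d : σ → R) : MvPolynomial σ R →ₐ[R] Polynomial R :=
  aeval fun i ↦ Polynomial.C (x i) + Polynomial.C (d i) * Polynomial.X

theorem eval_restrictLine (x d : σ → R) (Q : MvPolynomial σ R) (t : R) :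
    (restrictLine x d Q).eval t = eval (x + t • d) Q := by
  have hcomp : (Polynomial.aeval t).comp (restrictLine x d) = aeval (x + t • d) := by
    ext i
    rw [AlgHom.comp_apply, restrictLine, aeval_X, aeval_X]
    simp [mul_comm (d i)]
  simpa [Polynomial.coe_aeval_eq_eval, coe_aeval_eq_eval] using DFunLike.congr_fun hcomp Q

theorem natDegree_restrictLine_le (x d : σ → R) (Q : MvPolynomial σ R) :
    (restrictLine x d Q).natDegree ≤ Q.totalDegree := by
  have hlinear : ∀ i, (Polynomial.C (x i) + Polynomial.C (d i) * Polynomial.X).natDegree ≤ 1 :=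
    fun i ↦ by compute_degree
  simpa only [restrictLine, mul_one] using aeval_natDegree_le Q le_rfl _ hlinear

theorem derivative_restrictLine [Fintype σ] (x d : σ → R) (Q : MvPolynomial σ R) :
    (restrictLine x d Q).derivative =
      ∑ i, Polynomial.C (d i) * restrictLine x d (pderiv i Q) := by
  classical
  induction Q using MvPolynomial.induction_on with
  | C a => simp [restrictLine]
  | add P Q hP hQ => simp [hP, hQ, mul_add, Finset.sum_add_distrib]
  | mul_X Q j hQ =>
    have hX : restrictLine x d (X j) = Polynomial.C (x j) + Polynomial.C (d j) * Polynomial.X := by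
      simp [restrictLine]
    have hterm : ∀ i, Polynomial.C (d i) * restrictLine x d (pderiv i (Q * X j)) =
        restrictLine x d Q * (if j = i then Polynomial.C (d i) else 0) +
          Polynomial.C (d i) * restrictLine x d (pderiv i Q) * restrictLine x d (X j) := fun i ↦ by
      rw [Derivation.leibniz, pderiv_X, Pi.single_apply]
      split_ifs <;> simp <;> ring
    rw [map_mul, Polynomial.derivative_mul, hQ, Finset.sum_congr rfl fun i _ ↦ hterm i,
      Finset.sum_add_distrib, ← Finset.mul_sum, ← Finset.sum_mul, hX]
    simp [add_comm]

theorem eval_eq_zero_of_infinite_line_zeros [IsDomain R] {Q : MvPolynomial σ R} {x d : σ → R}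
    (hzeros : {t : R | eval (x + t • d) Q = 0}.Infinite) (t : R) : eval (x + t • d) Q = 0 := by
  have hrestrict : restrictLine x d Q = 0 :=
    Polynomial.eq_zero_of_infinite_isRoot _ <| by
      simpa only [Polynomial.IsRoot, eval_restrictLine] using hzeros
  rw [← eval_restrictLine, hrestrict, Polynomial.eval_zero]

end Line

section SecondOrder

variable {σ : Type*}

/-- Vanishing of `Q` to second order at `x`. The gradient is the formal one, so that its components
are again polynomials and the condition makes sense over any coefficient ring. -/
def VanishesToSecondOrderAt {R : Type*} [CommSemiring R] (Q : MvPolynomial σ R) (x : σ → R) :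
    Prop :=
  eval x Q = 0 ∧ ∀ i, eval x (pderiv i Q) = 0

theorem VanishesToSecondOrderAt.isRoot_restrictLine [Finite σ] {R : Type*} [CommRing R]
    {Q : MvPolynomial σ R} {x d : σ → R} {t : R} (h : VanishesToSecondOrderAt Q (x + t • d)) :
    (restrictLine x d Q).IsRoot t ∧ (restrictLine x d Q).derivative.IsRoot t := by
  cases nonempty_fintype σ
  simp [Polynomial.IsRoot, derivative_restrictLine, Polynomial.eval_finsetSum, eval_restrictLine,
    h.1, h.2]

theorem fderiv_eval_apply [Fintype σ] {𝕜 : Type*} [NontriviallyNormedField 𝕜] [CompleteSpace 𝕜]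
    (Q : MvPolynomial σ 𝕜) (x d : σ → 𝕜) :
    fderiv 𝕜 (fun y ↦ eval y Q) x d = ∑ i, d i * eval x (pderiv i Q) := by
  have hline : HasDerivAt (fun t : 𝕜 ↦ x + t • d) d 0 := by
    simpa using ((hasDerivAt_id (0 : 𝕜)).smul_const d).const_add x
  have hdiff : DifferentiableAt 𝕜 (fun y ↦ eval y Q) (x + (0 : 𝕜) • d) :=
    (AnalyticOnNhd.eval_mvPolynomial Q _ trivial).differentiableAt
  have hchain := hdiff.hasFDerivAt.comp_hasDerivAt (0 : 𝕜) hline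
  have hpoly := (restrictLine x d Q).hasDerivAt 0
  simp only [eval_restrictLine] at hpoly
  simpa [derivative_restrictLine, Polynomial.eval_finsetSum, eval_restrictLine] using
    hchain.unique hpoly

theorem vanishesToSecondOrderAt_of_fderiv_eq_zero [Finite σ] {𝕜 : Type*}
    [NontriviallyNormedField 𝕜] [CompleteSpace 𝕜] {Q : MvPolynomial σ 𝕜} {x : σ → 𝕜}
    (hQ : eval x Q = 0) (hQ' : fderiv 𝕜 (fun y ↦ eval y Q) x = 0) :
    VanishesToSecondOrderAt Q x := by
  classical
  cases nonempty_fintype σ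
  refine ⟨hQ, fun i ↦ ?_⟩
  simpa [hQ', Pi.single_apply] using (fderiv_eval_apply Q x (Pi.single i 1)).symm

end SecondOrder

section Hyperplanes

variable {ι K : Type*} [Field K] [Infinite K]

theorem exists_direction_injective_div {V P : Type*} [Finite ι] [AddCommGroup V] [Module K V]
    [AddTorsor V P] {ℓ : ι → P →ᵃ[K] K} (hzero : ∀ i, ∃ p, ℓ i p = 0)
    (hsep : ∀ i j, i ≠ j → ∃ p, ℓ i p = 0 ∧ ℓ j p ≠ 0) {x : P} (hx : ∀ i, ℓ i x ≠ 0) :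
    ∃ d : V, (∀ i, (ℓ i).linear d ≠ 0) ∧ Function.Injective fun i ↦ ℓ i x / (ℓ i).linear d := by
  let form : ι ⊕ {ij : ι × ι // ij.1 ≠ ij.2} → Module.Dual K V :=
    Sum.elim (fun i ↦ (ℓ i).linear) fun ij ↦
      ℓ ij.1.1 x • (ℓ ij.1.2).linear - ℓ ij.1.2 x • (ℓ ij.1.1).linear
  have hform : ∀ k, ∃ d, form k d ≠ 0 := by
    rintro (i | ⟨⟨i, j⟩, hij⟩)
    · obtain ⟨p, hp⟩ := hzero i
      exact ⟨p -ᵥ x, by simpa [form, hp] using hx i⟩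
    · obtain ⟨p, hpi, hpj⟩ := hsep i j hij
      have hcross : form (.inr ⟨(i, j), hij⟩) (p -ᵥ x) = ℓ i x * ℓ j p := by
        simp only [form, Sum.elim_inr, LinearMap.sub_apply, LinearMap.smul_apply,
          AffineMap.linearMap_vsub, vsub_eq_sub, smul_eq_mul, hpi]
        ring
      exact ⟨p -ᵥ x, hcross ▸ mul_ne_zero (hx i) hpj⟩
  obtain ⟨d, hd⟩ := Module.Dual.exists_forall_ne_zero_of_forall_exists form hform
  have hlinear : ∀ i, (ℓ i).linear d ≠ 0 := fun i ↦ hd (.inl i)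
  refine ⟨d, hlinear, fun i j heq ↦ ?_⟩
  by_contra hij
  exact hd (.inr ⟨(i, j), hij⟩) (sub_eq_zero.2 ((div_eq_div_iff (hlinear i) (hlinear j)).1 heq))

theorem eval_eq_zero_of_vanishesToSecondOrderAt_hyperplanes {σ : Type*} [Finite σ] [Fintype ι]
    {Q : MvPolynomial σ K} (hdeg : Q.totalDegree < 2 * Fintype.card ι)
    {ℓ : ι → (σ → K) →ᵃ[K] K} (hzero : ∀ i, ∃ p, ℓ i p = 0)
    (hsep : ∀ i j, i ≠ j → ∃ p, ℓ i p = 0 ∧ ℓ j p ≠ 0)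
    (hQ : ∀ i y, ℓ i y = 0 → VanishesToSecondOrderAt Q y) (x : σ → K) : eval x Q = 0 := by
  classical
  by_cases hx : ∃ i, ℓ i x = 0
  · obtain ⟨i, hi⟩ := hx
    exact (hQ i x hi).1
  push Not at hx
  obtain ⟨d, hd, hinj⟩ := exists_direction_injective_div hzero hsep hx
  let t : ι → K := fun i ↦ -(ℓ i x / (ℓ i).linear d)
  have ht : Function.Injective t := neg_injective.comp hinj
  have hmeet : ∀ i, ℓ i (x + t i • d) = 0 := fun i ↦ by
    have hdecomp := (ℓ i).map_vadd x (t i • d)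
    rw [vadd_eq_add, add_comm, map_smul, vadd_eq_add] at hdecomp
    rw [hdecomp, smul_eq_mul, neg_mul, div_mul_cancel₀ _ (hd i), neg_add_cancel]
  have hrestrict : restrictLine x d Q = 0 := by
    refine eq_zero_of_natDegree_lt_two_mul_card_double_roots (Finset.univ.image t) ?_ ?_
    · simpa using fun i ↦ (hQ i _ (hmeet i)).isRoot_restrictLine
    · rw [Finset.card_image_of_injective _ ht, Finset.card_univ]
      exact (natDegree_restrictLine_le x d Q).trans_lt hdeg
  simpa [hrestrict] using (eval_restrictLine x d Q 0).symm

end Hyperplanes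

section Simplex

variable {ι 𝕜 E : Type*} [Finite ι] [Field 𝕜] [LinearOrder 𝕜] [IsStrictOrderedRing 𝕜]
  [AddCommGroup E] [Module 𝕜 E]

theorem mem_convexHull_image_compl_of_coord_nonneg (b : AffineBasis ι 𝕜 E) {i : ι} {y : E}
    (hi : b.coord i y = 0) (hy : ∀ j, 0 ≤ b.coord j y) : y ∈ convexHull 𝕜 (b '' {i}ᶜ) := by
  classical
  cases nonempty_fintype ι
  have hsum : ∑ j ∈ Finset.univ.erase i, b.coord j y = 1 := by
    rw [Finset.sum_erase (f := fun j ↦ b.coord j y) _ hi, b.sum_coord_apply_eq_one]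
  have hcomb : ∑ j ∈ Finset.univ.erase i, b.coord j y • b j = y := by
    rw [Finset.sum_erase _ (by rw [hi, zero_smul]), b.linear_combination_coord_eq_self]
  rw [← hcomb]
  refine (convex_convexHull 𝕜 _).sum_mem (fun j _ ↦ hy j) hsum fun j hj ↦ ?_
  exact subset_convexHull 𝕜 _ ⟨j, Finset.ne_of_mem_erase hj, rfl⟩

theorem exists_coord_eq_zero_and_pos [Nontrivial ι] (b : AffineBasis ι 𝕜 E) (i : ι) :
    ∃ c, b.coord i c = 0 ∧ ∀ j, j ≠ i → 0 < b.coord j c := by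
  classical
  cases nonempty_fintype ι
  have hne : (Finset.univ.erase i).Nonempty := by
    obtain ⟨j, hj⟩ := exists_ne i
    exact ⟨j, Finset.mem_erase.2 ⟨hj, Finset.mem_univ j⟩⟩
  have hweights := (Finset.univ.erase i).sum_centroidWeights_eq_one_of_nonempty 𝕜 hne
  refine ⟨(Finset.univ.erase i).centroid 𝕜 b, ?_, fun j hj ↦ ?_⟩
  · exact b.coord_apply_combination_of_notMem (Finset.notMem_erase i _) hweights
  · rw [b.coord_apply_centroid (Finset.mem_erase.2 ⟨hj, Finset.mem_univ j⟩)]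
    exact inv_pos.2 (Nat.cast_pos.2 hne.card_pos)

theorem eval_eq_zero_of_coord_eq_zero {σ : Type*} [Nontrivial ι] (b : AffineBasis ι ℝ (σ → ℝ))
    {Q : MvPolynomial σ ℝ} {i : ι} (hQ : ∀ x ∈ convexHull ℝ (b '' {i}ᶜ), eval x Q = 0)
    {y : σ → ℝ} (hy : b.coord i y = 0) : eval y Q = 0 := by
  obtain ⟨c, hci, hc⟩ := exists_coord_eq_zero_and_pos b i
  have hcoord : ∀ j (t : ℝ), b.coord j (c + t • (y - c)) =
      b.coord j c + t * (b.coord j y - b.coord j c) := fun j t ↦ by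
    have h := (b.coord j).apply_lineMap c y t
    simpa [AffineMap.lineMap_apply, add_comm] using h
  have hnonneg : ∀ᶠ t : ℝ in nhds 0, ∀ j, 0 ≤ b.coord j (c + t • (y - c)) := by
    refine Filter.eventually_all.2 fun j ↦ ?_
    obtain rfl | hj := eq_or_ne j i
    · simp [hcoord, hci, hy]
    · have hcont : ContinuousAt (fun t : ℝ ↦ b.coord j (c + t • (y - c))) 0 := by
        simp only [hcoord]
        fun_prop
      exact (hcont.eventually_const_lt (by simpa using hc j hj)).mono fun _ ↦ le_of_lt
  have hzeros : {t : ℝ | eval (c + t • (y - c)) Q = 0}.Infinite := by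
    refine (infinite_of_mem_nhds 0 hnonneg).mono fun t ht ↦ hQ _ ?_
    exact mem_convexHull_image_compl_of_coord_nonneg b (by simp [hcoord, hci, hy]) ht
  simpa using eval_eq_zero_of_infinite_line_zeros hzeros 1

theorem convexHull_image_compl_singleton_fin_three (v : Fin 3 → E) (i : Fin 3) :
    convexHull 𝕜 (v '' {i}ᶜ) = segment 𝕜 (v (i + 1)) (v (i + 2)) := by
  have hcompl : ({i}ᶜ : Set (Fin 3)) = {i + 1, i + 2} := by
    ext j
    fin_cases i <;> fin_cases j <;> simp
  rw [hcompl, Set.image_pair, convexHull_pair]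

end Simplex

theorem quintic_vanishing_on_triangle_boundary_general {ι σ : Type*} [Fintype ι] [Fintype σ]
    [Nonempty σ] (hcard : Fintype.card ι = Fintype.card σ + 1) (v : ι → σ → ℝ)
    (hv : AffineIndependent ℝ v) (q : (σ → ℝ) → ℝ)
    (hq : ∃ Q : MvPolynomial σ ℝ, Q.totalDegree < 2 * Fintype.card ι ∧ ∀ x, q x = eval x Q)
    (h : ∀ i, ∀ x ∈ convexHull ℝ (v '' {i}ᶜ), q x = 0 ∧ fderiv ℝ q x = 0) :
    ∀ x, q x = 0 := by
  obtain ⟨Q, hdeg, hqQ⟩ := hq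
  obtain rfl : q = fun x ↦ eval x Q := funext hqQ
  have : Nontrivial ι := Fintype.one_lt_card_iff_nontrivial.1 <| by
    have := Fintype.card_pos (α := σ)
    lia
  have hspan : affineSpan ℝ (Set.range v) = ⊤ :=
    hv.affineSpan_eq_top_iff_card_eq_finrank_add_one.2 (by simpa using hcard)
  let b : AffineBasis ι ℝ (σ → ℝ) := ⟨v, hv, hspan⟩
  have hfacet : ∀ i, ∀ x ∈ convexHull ℝ (b '' {i}ᶜ), VanishesToSecondOrderAt Q x :=
    fun i x hx ↦ vanishesToSecondOrderAt_of_fderiv_eq_zero (h i x hx).1 (h i x hx).2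
  have hplane : ∀ i y, b.coord i y = 0 → VanishesToSecondOrderAt Q y := fun i y hy ↦
    ⟨eval_eq_zero_of_coord_eq_zero b (fun x hx ↦ (hfacet i x hx).1) hy,
      fun k ↦ eval_eq_zero_of_coord_eq_zero b (fun x hx ↦ (hfacet i x hx).2 k) hy⟩
  refine eval_eq_zero_of_vanishesToSecondOrderAt_hyperplanes hdeg
    (fun i ↦ b.surjective_coord i 0) (fun i j hij ↦ ⟨b j, ?_, ?_⟩) hplane
  · exact b.coord_apply_ne hij
  · simp

/-- A polynomial function of total degree at most `5` on `ℝ²` which vanishes together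
with its gradient on each of the three closed edges of a nondegenerate triangle is
identically zero. -/
theorem quintic_vanishing_on_triangle_boundary
    (v : Fin 3 → Fin 2 → ℝ) (hv : AffineIndependent ℝ v)
    (q : (Fin 2 → ℝ) → ℝ)
    (hq : ∃ Q : MvPolynomial (Fin 2) ℝ, Q.totalDegree ≤ 5 ∧
      ∀ x, q x = MvPolynomial.eval x Q)
    (h : ∀ i j : Fin 3, i ≠ j → ∀ x ∈ segment ℝ (v i) (v j),
      q x = 0 ∧ fderiv ℝ q x = 0) :
    ∀ x, q x = 0 := by
  refine quintic_vanishing_on_triangle_boundary_general rfl v hv q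
    (hq.imp fun _ hQ ↦ ⟨Nat.lt_succ_of_le hQ.1, hQ.2⟩) fun i x hx ↦ ?_
  rw [convexHull_image_compl_singleton_fin_three] at hx
  exact h (i + 1) (i + 2) (by simp) x hx
end

section
/- Let v₀, v₁, v₂ ∈ ℝ² be affinely independent (the vertices of a nondegenerate triangle T with interior of positive area). Let 𝕊 denote symmetric 2×2 real matrices and let τ : ℝ² → 𝕊 be a polynomial matrix field of total degree at most 3 whose row-wise divergence div τ (with (div τ)ᵢ = ∂₁τᵢ₁ + ∂₂τᵢ₂) has total degree at most 1. Suppose: (a) τ(vᵢ) = 0 for i = 0,1,2; (b) for each edge e of T from vertex v to vertex w, with n a nonzero normal vector to e, ∫₀¹ τ((1−t)v + t w)·n dt = 0 and ∫₀¹ t · (τ((1−t)v + t w)·n) dt = 0 (as equations in ℝ²); (c) ∫_T τ(x) dx = 0 (entrywise). Then τ is identically zero. -/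
/-!
A symmetric cubic field `τ` is expanded in the dyads `e eᵀ` of the three edge vectors; the
coefficient attached to an edge is, up to scale, the component `nᵀ τ m` along the normals `n`, `m`
of the other two. The restriction of a traction `τ n` to its edge is a cubic with zeros at both
endpoints that is orthogonal to the affine functions, so it vanishes, and hence each coefficient
vanishes on two of the three edges. Since the coefficient of `e eᵀ` contributes only its derivative
along `e` to the divergence, integrating by parts against the affine field `div τ`, whose gradient
is constant, and using the zero mean of `τ`, one finds `∫ |div τ|² = 0`. As the edge vectors satisfy
only the relation `∑ e = 0`, `div τ = 0` makes these three derivatives equal. At a vertex one of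
them vanishes, because its coefficient vanishes on both adjacent edges, so all three do. Each
coefficient thus vanishes to second order at both ends of its own edge, hence on that edge. It is
therefore a multiple of the cubic bubble function, and its mean is zero, so it is zero.
-/

namespace ArnoldWinther

open MvPolynomial MeasureTheory Set
open scoped Polynomial

section Integral

theorem eqOn_zero_of_setIntegral_eq_zero {X : Type*} [TopologicalSpace X] [T2Space X]
    [MeasurableSpace X] [OpensMeasurableSpace X] {μ : Measure X} [μ.IsOpenPosMeasure]
    [IsFiniteMeasureOnCompacts μ] {s : Set X} (hs : IsCompact s) (hs' : s ⊆ closure (interior s))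
    {f : X → ℝ} (hf : ContinuousOn f s) (hf₀ : ∀ x ∈ s, 0 ≤ f x) (hint : ∫ x in s, f x ∂μ = 0) :
    EqOn f 0 s := by
  have hf₀' : 0 ≤ᵐ[μ.restrict s] f := ae_restrict_of_forall_mem hs.measurableSet hf₀
  exact Measure.eqOn_of_ae_eq
    ((setIntegral_eq_zero_iff_of_nonneg_ae hf₀' (hf.integrableOn_compact hs)).1 hint)
    hf continuousOn_const hs'

theorem setIntegral_prod_eq_zero_of_slices {α β E : Type*} [MeasurableSpace α] [MeasurableSpace β]
    [NormedAddCommGroup E] [NormedSpace ℝ E] {μ : Measure α} {ν : Measure β} [SFinite μ]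
    [SFinite ν] {s : Set (α × β)} (hs : MeasurableSet s) {f : α × β → E}
    (hf : IntegrableOn f s (μ.prod ν))
    (hslice : ∀ x, ∫ y in Prod.mk x ⁻¹' s, f (x, y) ∂ν = 0) :
    ∫ z in s, f z ∂μ.prod ν = 0 := by
  rw [← integral_indicator hs, integral_prod _ ((integrable_indicator_iff hs).2 hf)]
  refine integral_eq_zero_of_ae (.of_forall fun x => ?_)
  rw [Pi.zero_apply, ← hslice x, ← integral_indicator (measurable_prodMk_left hs)]
  rfl

theorem intervalIntegral_apply {ι : Type*} [Fintype ι] {f : ℝ → ι → ℝ} (hf : Continuous f)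
    (a b : ℝ) (k : ι) : (∫ t in a..b, f t) k = ∫ t in a..b, f t k :=
  ((ContinuousLinearMap.proj (R := ℝ) (φ := fun _ : ι => ℝ) k).intervalIntegral_comp_comm
    (hf.intervalIntegrable a b)).symm

end Integral

section Univariate

theorem eq_zero_of_double_roots {K : Type*} [Field K] {P : K[X]} {a b : K} (hab : a ≠ b)
    (hdeg : P.natDegree < 4) (ha : P.eval a = 0) (ha' : P.derivative.eval a = 0)
    (hb : P.eval b = 0) (hb' : P.derivative.eval b = 0) : P = 0 := by
  by_contra hP
  have hdvd (c : K) (hc : P.eval c = 0) (hc' : P.derivative.eval c = 0) :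
      (Polynomial.X - Polynomial.C c) ^ 2 ∣ P :=
    (Polynomial.le_rootMultiplicity_iff hP).1
      ((Polynomial.one_lt_rootMultiplicity_iff_isRoot hP).2 ⟨hc, hc'⟩)
  have hcop :
      IsCoprime ((Polynomial.X - Polynomial.C a) ^ 2) ((Polynomial.X - Polynomial.C b) ^ 2) :=
    (Polynomial.isCoprime_X_sub_C_of_isUnit_sub (sub_ne_zero.2 hab).isUnit).pow
  refine hP (Polynomial.eq_zero_of_dvd_of_natDegree_lt
    (hcop.mul_dvd (hdvd a ha ha') (hdvd b hb hb')) ?_)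
  rw [Polynomial.natDegree_mul (pow_ne_zero _ (Polynomial.X_sub_C_ne_zero a))
    (pow_ne_zero _ (Polynomial.X_sub_C_ne_zero b))]
  simpa using hdeg

theorem integral_mul_eval_eq_zero_of_moments {P Q : ℝ[X]} {n : ℕ} (hQ : Q.natDegree ≤ n) {a b : ℝ}
    (hmoment : ∀ k ≤ n, ∫ t in a..b, t ^ k * P.eval t = 0) :
    ∫ t in a..b, Q.eval t * P.eval t = 0 := by
  simp_rw [Polynomial.eval_eq_sum_range' (Nat.lt_succ_of_le hQ), Finset.sum_mul, mul_assoc]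
  rw [intervalIntegral.integral_finsetSum fun k _ =>
    Continuous.intervalIntegrable (by fun_prop) _ _]
  refine Finset.sum_eq_zero fun k hk => ?_
  rw [intervalIntegral.integral_const_mul, hmoment k (Finset.mem_range_succ_iff.1 hk), mul_zero]

/-- Writing `P = X (1 - X) R`, orthogonality to `R` gives `∫ t (1 - t) R(t)² = 0`. -/
theorem eq_zero_of_roots_of_moments {P : ℝ[X]} {n : ℕ} (hdeg : P.natDegree ≤ n + 2)
    (h₀ : P.eval 0 = 0) (h₁ : P.eval 1 = 0)
    (hmoment : ∀ k ≤ n, ∫ t in (0 : ℝ)..1, t ^ k * P.eval t = 0) : P = 0 := by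
  obtain ⟨S, rfl⟩ := Polynomial.dvd_iff_isRoot.2 h₀
  obtain ⟨R, rfl⟩ : Polynomial.X - Polynomial.C 1 ∣ S :=
    Polynomial.dvd_iff_isRoot.2 (by simpa using h₁)
  by_contra hP
  have hR : R ≠ 0 := by rintro rfl; simp at hP
  have hRdeg : R.natDegree ≤ n := by
    rw [Polynomial.natDegree_mul (Polynomial.X_sub_C_ne_zero _)
      (mul_ne_zero (Polynomial.X_sub_C_ne_zero _) hR),
      Polynomial.natDegree_mul (Polynomial.X_sub_C_ne_zero _) hR,
      Polynomial.natDegree_X_sub_C, Polynomial.natDegree_X_sub_C] at hdeg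
    lia
  have hint : ∫ t in Icc (0 : ℝ) 1, t * (1 - t) * R.eval t ^ 2 = 0 := by
    have horth := integral_mul_eval_eq_zero_of_moments hRdeg hmoment
    rw [intervalIntegral.integral_of_le zero_le_one, ← integral_Icc_eq_integral_Ioc] at horth
    rw [← neg_eq_zero, ← integral_neg]
    refine (integral_congr_ae (.of_forall fun t => ?_)).trans horth
    simp only [Polynomial.eval_mul, Polynomial.eval_sub, Polynomial.eval_X, Polynomial.eval_C]
    ring
  have hzero : EqOn (fun t => t * (1 - t) * R.eval t ^ 2) 0 (Icc 0 1) :=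
    eqOn_zero_of_setIntegral_eq_zero isCompact_Icc (closure_interior_Icc zero_ne_one).ge
      (by fun_prop)
      (fun t ht => mul_nonneg (mul_nonneg ht.1 (sub_nonneg.2 ht.2)) (sq_nonneg _)) hint
  refine hR (Polynomial.eq_zero_of_infinite_isRoot R
    ((Ioo_infinite (zero_lt_one' ℝ)).mono fun t ht => ?_))
  have := hzero (Ioo_subset_Icc_self ht)
  simpa [ht.1.ne', (sub_pos.2 ht.2).ne'] using this

end Univariate

section Multivariate

variable {σ R : Type*}

/-- For an affine form `ℓ` whose linear part takes the value `1` at `w`, the points `x - ℓ(x) w` are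
exactly those of the hyperplane `ℓ = 0`. -/
theorem dvd_of_eval_sub_smul_eq_zero [CommRing R] [IsDomain R] [Infinite R]
    {ℓ p : MvPolynomial σ R} (w : σ → R) (hp : ∀ x, eval (x - eval x ℓ • w) p = 0) : ℓ ∣ p := by
  have hsubst : bind₁ (fun i => X i - ℓ * C (w i)) p = 0 := by
    refine funext fun x => ?_
    rw [map_zero, ← hp x, eval, eval₂Hom_bind₁]
    exact congrArg (eval · p) (by ext i; simp)
  have hcongr : (Ideal.Quotient.mkₐ R (Ideal.span {ℓ})).comp (bind₁ fun i => X i - ℓ * C (w i)) =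
      Ideal.Quotient.mkₐ R (Ideal.span {ℓ}) := by
    ext i
    simp [Ideal.Quotient.mk_singleton_self]
  have := DFunLike.congr_fun hcongr p
  rw [AlgHom.comp_apply, hsubst, map_zero] at this
  exact Ideal.mem_span_singleton.1 (Ideal.Quotient.eq_zero_iff_mem.1 this.symm)

/-- Restriction of a polynomial to the line through `a` and `b`, parametrized so that `0 ↦ a` and
`1 ↦ b`. -/
noncomputable def lineRestrict [CommRing R] (a b : σ → R) : MvPolynomial σ R →ₐ[R] R[X] :=
  aeval fun i => Polynomial.C (a i) + Polynomial.C (b i - a i) * Polynomial.X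

theorem eval_lineRestrict [CommRing R] (a b : σ → R) (p : MvPolynomial σ R) (t : R) :
    (lineRestrict a b p).eval t = eval (AffineMap.lineMap a b t) p := by
  rw [lineRestrict, ← Polynomial.coe_aeval_eq_eval, ← AlgHom.comp_apply, comp_aeval,
    ← MvPolynomial.coe_aeval_eq_eval]
  exact congrArg (MvPolynomial.aeval · p)
    (by ext i; simp [AffineMap.lineMap_apply, mul_comm, add_comm])

theorem natDegree_lineRestrict_le [CommRing R] (a b : σ → R) (p : MvPolynomial σ R) :
    (lineRestrict a b p).natDegree ≤ p.totalDegree := by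
  simpa [lineRestrict] using aeval_natDegree_le (n := 1) p le_rfl _ fun i => by compute_degree

theorem lineRestrict_eq_zero_of_moments {p : MvPolynomial σ ℝ} {a b : σ → ℝ} {n : ℕ}
    (hdeg : p.totalDegree ≤ n + 2) (ha : eval a p = 0) (hb : eval b p = 0)
    (hmoment : ∀ k ≤ n, ∫ t in (0 : ℝ)..1, t ^ k * eval (AffineMap.lineMap a b t) p = 0) :
    lineRestrict a b p = 0 := by
  refine eq_zero_of_roots_of_moments ((natDegree_lineRestrict_le a b p).trans hdeg) ?_ ?_ ?_
  · rwa [eval_lineRestrict, AffineMap.lineMap_apply_zero]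
  · rwa [eval_lineRestrict, AffineMap.lineMap_apply_one]
  · simpa only [eval_lineRestrict] using hmoment

/-- The derivative of a polynomial in the direction `e`. -/
noncomputable def dirDeriv [CommRing R] (e : σ → R) :
    Derivation R (MvPolynomial σ R) (MvPolynomial σ R) :=
  mkDerivation R fun i => C (e i)

theorem dirDeriv_X [CommRing R] (e : σ → R) (i : σ) : dirDeriv e (X i) = C (e i) :=
  mkDerivation_X R _ i

theorem dirDeriv_add [CommRing R] (e f : σ → R) (p : MvPolynomial σ R) :
    dirDeriv (e + f) p = dirDeriv e p + dirDeriv f p := by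
  have : dirDeriv (e + f) = dirDeriv e + dirDeriv f :=
    derivation_ext fun i => by simp [dirDeriv_X]
  rw [this, Derivation.add_apply]

theorem dirDeriv_neg [CommRing R] (e : σ → R) (p : MvPolynomial σ R) :
    dirDeriv (-e) p = -dirDeriv e p := by
  have : dirDeriv (-e) = -dirDeriv e := derivation_ext fun i => by simp [dirDeriv_X]
  rw [this, Derivation.neg_apply]

theorem totalDegree_dirDeriv_le [CommRing R] (e : σ → R) (p : MvPolynomial σ R) :
    (dirDeriv e p).totalDegree ≤ p.totalDegree - 1 := by
  rw [p.as_sum, map_sum, ← p.as_sum]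
  refine totalDegree_finsetSum_le fun m hm => ?_
  rw [dirDeriv, mkDerivation_monomial]
  refine (totalDegree_smul_le _ _).trans (totalDegree_finsetSum_le fun i hi => ?_)
  have hm' : m.degree ≤ p.totalDegree := le_totalDegree hm
  have hsub : (m - Finsupp.single i 1).degree + 1 = m.degree := by
    conv_rhs => rw [← tsub_add_cancel_of_le (Finsupp.single_le_iff.2
      (Nat.one_le_iff_ne_zero.2 (Finsupp.mem_support_iff.1 hi)))]
    rw [map_add, Finsupp.degree_single]
  simp only [smul_eq_mul, mul_comm _ (C _), C_mul_monomial]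
  exact (totalDegree_monomial_le _ _).trans (Nat.le_sub_of_add_le (hsub.trans_le hm'))

theorem dirDeriv_eq_sum_pderiv [CommRing R] [Fintype σ] (e : σ → R) (p : MvPolynomial σ R) :
    dirDeriv e p = ∑ i, C (e i) * pderiv i p := by
  classical
  induction p using MvPolynomial.induction_on with
  | C r => simp
  | add p q hp hq => simp only [map_add, hp, hq, mul_add, Finset.sum_add_distrib]
  | mul_X p i hp =>
    simp [Derivation.leibniz, hp, dirDeriv_X, pderiv_X, Pi.single_apply, mul_add,
      Finset.sum_add_distrib, Finset.mul_sum, mul_left_comm, mul_comm]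

theorem derivative_lineRestrict [CommRing R] (a b : σ → R) (p : MvPolynomial σ R) :
    (lineRestrict a b p).derivative = lineRestrict a b (dirDeriv (b - a) p) := by
  induction p using MvPolynomial.induction_on with
  | C r => simp [lineRestrict]
  | add p q hp hq => simp only [map_add, hp, hq]
  | mul_X p i hp =>
    rw [map_mul, Polynomial.derivative_mul, hp, Derivation.leibniz]
    simp only [lineRestrict, dirDeriv_X, aeval_X, algHom_C, Polynomial.algebraMap_eq,
      smul_eq_mul, map_add, map_mul, Polynomial.derivative_C, Polynomial.derivative_mul,
      Polynomial.derivative_X, Pi.sub_apply]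
    ring

theorem hasFDerivAt_eval [Fintype σ] (p : MvPolynomial σ ℝ) (x : σ → ℝ) :
    HasFDerivAt (fun y => eval y p)
      (∑ i, eval x (pderiv i p) • ContinuousLinearMap.proj (R := ℝ) (φ := fun _ : σ => ℝ) i) x := by
  classical
  induction p using MvPolynomial.induction_on with
  | C r => simpa using hasFDerivAt_const r x
  | add p q hp hq =>
    simp only [map_add, add_smul, Finset.sum_add_distrib]
    exact hp.add hq
  | mul_X p i hp =>
    have h := hp.mul (hasFDerivAt_apply (𝕜 := ℝ) i x)
    simp only [map_mul, eval_X]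
    refine h.congr_fderiv ?_
    ext v
    simp [pderiv_X, Pi.single_apply, apply_ite (eval x), Finset.mul_sum, add_mul,
      Finset.sum_add_distrib, mul_assoc]

end Multivariate

section Triangle

/-- The signed area of the parallelogram spanned by two plane vectors. -/
def cross (a b : Fin 2 → ℝ) : ℝ := a 0 * b 1 - a 1 * b 0

/-- The rotation of a plane vector by a right angle. -/
def rot (a : Fin 2 → ℝ) : Fin 2 → ℝ := ![-a 1, a 0]

theorem sum_rot_mul_self (a : Fin 2 → ℝ) : ∑ k, rot a k * a k = 0 := by
  simp only [rot, Fin.sum_univ_two, Matrix.cons_val]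
  ring

variable (v : Fin 3 → Fin 2 → ℝ)

/-- The edge vector opposite the vertex `v i`. Indices are taken modulo 3. -/
def edge (i : Fin 3) : Fin 2 → ℝ := v (i + 2) - v (i + 1)

/-- Twice the signed area of the triangle with vertices `v`. -/
def doubleArea : ℝ := cross (v 1 - v 0) (v 2 - v 0)

variable {v} in
theorem doubleArea_ne_zero (hv : AffineIndependent ℝ v) : doubleArea v ≠ 0 := by
  have hli : LinearIndependent ℝ ![v 1 - v 0, v 2 - v 0] := by
    rw [show ![v 1 - v 0, v 2 - v 0] =
      (fun i : {i : Fin 3 // i ≠ 0} => v i -ᵥ v 0) ∘ finSuccAboveEquiv 0 by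
        ext k : 1; fin_cases k <;> rfl]
    exact ((affineIndependent_iff_linearIndependent_vsub ℝ v 0).1 hv).comp _
      (finSuccAboveEquiv 0).injective
  have hdet := (Matrix.isUnit_iff_isUnit_det _).1
    ((Matrix.linearIndependent_rows_iff_isUnit (A := .of ![v 1 - v 0, v 2 - v 0])).1 hli)
  simpa [Matrix.det_fin_two, doubleArea, cross] using hdet.ne_zero

/-- The affine form vanishing on the edge opposite `v i`, normalized to take the value
`doubleArea v` at `v i`: the `i`-th barycentric coordinate times `doubleArea v`. -/
noncomputable def edgeForm (i : Fin 3) : MvPolynomial (Fin 2) ℝ :=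
  C (edge v i 0) * (X 1 - C (v (i + 1) 1)) - C (edge v i 1) * (X 0 - C (v (i + 1) 0))

theorem eval_edgeForm (i : Fin 3) (x : Fin 2 → ℝ) :
    eval x (edgeForm v i) = cross (edge v i) (x - v (i + 1)) := by
  simp [edgeForm, cross]

theorem eval_edgeForm_self (i : Fin 3) : eval (v i) (edgeForm v i) = doubleArea v := by
  rw [eval_edgeForm]
  fin_cases i <;> simp [cross, edge, doubleArea] <;> ring

theorem eval_edgeForm_of_ne {i j : Fin 3} (hij : i ≠ j) : eval (v j) (edgeForm v i) = 0 := by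
  rw [eval_edgeForm]
  obtain rfl | rfl : j = i + 1 ∨ j = i + 2 := by decide +revert
  · simp [cross]
  · exact sub_eq_zero.2 (mul_comm _ _)

variable {v} in
theorem rot_edge_ne_zero (hv : AffineIndependent ℝ v) (i : Fin 3) : rot (edge v i) ≠ 0 := by
  intro h
  have h₀ : edge v i 0 = 0 := congrFun h 1
  have h₁ : edge v i 1 = 0 := neg_eq_zero.1 (congrFun h 0)
  refine doubleArea_ne_zero hv ?_
  rw [← eval_edgeForm_self v i, eval_edgeForm, cross, h₀, h₁, zero_mul, zero_mul, sub_zero]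

/-- Restriction of a polynomial to the line through the edge opposite `v i`. -/
noncomputable abbrev edgeRestrict (i : Fin 3) : MvPolynomial (Fin 2) ℝ →ₐ[ℝ] ℝ[X] :=
  lineRestrict (v (i + 1)) (v (i + 2))

variable {v}

theorem edgeRestrict_edgeForm_ne_zero (hv : AffineIndependent ℝ v) {i j : Fin 3} (hij : i ≠ j) :
    edgeRestrict v i (edgeForm v j) ≠ 0 := by
  intro h
  have hline (t : ℝ) : eval (AffineMap.lineMap (v (i + 1)) (v (i + 2)) t) (edgeForm v j) = 0 := by
    rw [← eval_lineRestrict, h, Polynomial.eval_zero]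
  obtain rfl | rfl : j = i + 1 ∨ j = i + 2 := by clear h hline; decide +revert
  · exact doubleArea_ne_zero hv (by simpa [eval_edgeForm_self] using hline 0)
  · exact doubleArea_ne_zero hv (by simpa [eval_edgeForm_self] using hline 1)

theorem totalDegree_edgeForm_pos (hv : AffineIndependent ℝ v) (i : Fin 3) :
    0 < (edgeForm v i).totalDegree := by
  refine Nat.pos_of_ne_zero fun h => doubleArea_ne_zero hv ?_
  have hconst := totalDegree_eq_zero_iff_eq_C.1 h
  rw [← eval_edgeForm_self v i, ← eval_edgeForm_of_ne v (show i ≠ i + 1 by simp), hconst]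
  simp

theorem sub_eval_edgeForm_smul_eq_lineMap (hv : AffineIndependent ℝ v) (i : Fin 3) (x : Fin 2 → ℝ) :
    x - eval x (edgeForm v i) • ((doubleArea v)⁻¹ • (v i - v (i + 1))) =
      AffineMap.lineMap (v (i + 1)) (v (i + 2)) (eval x (edgeForm v (i + 2)) / doubleArea v) := by
  have hD := doubleArea_ne_zero hv
  simp only [eval_edgeForm]
  ext k
  simp only [AffineMap.lineMap_apply, vsub_eq_sub, vadd_eq_add, Pi.add_apply, Pi.sub_apply,
    Pi.smul_apply, smul_eq_mul]
  field_simp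
  fin_cases i <;> fin_cases k <;> simp [cross, edge, doubleArea] <;> ring

theorem edgeForm_dvd (hv : AffineIndependent ℝ v) {i : Fin 3} {p : MvPolynomial (Fin 2) ℝ}
    (hp : edgeRestrict v i p = 0) : edgeForm v i ∣ p := by
  refine dvd_of_eval_sub_smul_eq_zero ((doubleArea v)⁻¹ • (v i - v (i + 1))) fun x => ?_
  rw [sub_eval_edgeForm_smul_eq_lineMap hv, ← eval_lineRestrict, hp, Polynomial.eval_zero]

theorem edgeRestrict_eq_zero_of_edgeForm_mul (hv : AffineIndependent ℝ v) {i j : Fin 3}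
    (hij : i ≠ j) {p : MvPolynomial (Fin 2) ℝ} (hp : edgeRestrict v i (edgeForm v j * p) = 0) :
    edgeRestrict v i p = 0 := by
  rw [map_mul] at hp
  exact (mul_eq_zero.1 hp).resolve_left (edgeRestrict_edgeForm_ne_zero hv hij)

theorem exists_eq_C_mul_prod_edgeForm (hv : AffineIndependent ℝ v) {p : MvPolynomial (Fin 2) ℝ}
    (hdeg : p.totalDegree ≤ 3) (hp : ∀ i, edgeRestrict v i p = 0) :
    ∃ c, p = C c * ∏ i, edgeForm v i := by
  obtain rfl | hp₀ := eq_or_ne p 0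
  · exact ⟨0, by simp⟩
  obtain ⟨q, rfl⟩ := edgeForm_dvd hv (hp 0)
  obtain ⟨r, rfl⟩ := edgeForm_dvd hv
    (edgeRestrict_eq_zero_of_edgeForm_mul hv (by decide) (hp 1))
  obtain ⟨s, rfl⟩ := edgeForm_dvd hv
    (edgeRestrict_eq_zero_of_edgeForm_mul (j := 1) hv (by decide)
      (edgeRestrict_eq_zero_of_edgeForm_mul hv (by decide) (hp 2)))
  have hs : s.totalDegree = 0 := by
    simp only [mul_ne_zero_iff] at hp₀
    obtain ⟨h₀, h₁, h₂, hs⟩ := hp₀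
    rw [totalDegree_mul_of_isDomain h₀ (mul_ne_zero h₁ (mul_ne_zero h₂ hs)),
      totalDegree_mul_of_isDomain h₁ (mul_ne_zero h₂ hs), totalDegree_mul_of_isDomain h₂ hs] at hdeg
    have := totalDegree_edgeForm_pos hv
    linarith [this 0, this 1, this 2]
  refine ⟨coeff 0 s, ?_⟩
  rw [← totalDegree_eq_zero_iff_eq_C.1 hs, Fin.prod_univ_three]
  ring

end Triangle

section TriangleIntegral

variable {v : Fin 3 → Fin 2 → ℝ}

theorem convexHull_range_eq_image_stdSimplex {ι E : Type*} [Fintype ι] [AddCommGroup E]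
    [Module ℝ E] (w : ι → E) :
    convexHull ℝ (range w) = (fun c : ι → ℝ => ∑ i, c i • w i) '' stdSimplex ℝ ι := by
  classical
  have himage := (Fintype.linearCombination ℝ w).image_convexHull
    (range fun i : ι => (Pi.single i 1 : ι → ℝ))
  rw [convexHull_rangle_single_eq_stdSimplex, ← range_comp] at himage
  simp only [Function.comp_def, Fintype.linearCombination_apply_single, one_smul] at himage
  exact himage.symm

/-- The triangle with vertices `(0, 0)`, `(1, 0)` and `(0, 1)`. -/
def refTriangle : Set (Fin 2 → ℝ) := {z | 0 ≤ z 0 ∧ 0 ≤ z 1 ∧ z 0 + z 1 ≤ 1}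

theorem isCompact_refTriangle : IsCompact refTriangle := by
  refine (isCompact_Icc (a := 0) (b := 1)).of_isClosed_subset ?_ fun z ⟨h₀, h₁, hsum⟩ => ?_
  · simp only [refTriangle, ofPred_and]
    refine IsClosed.inter ?_ (IsClosed.inter ?_ ?_) <;>
      exact isClosed_le (by fun_prop) (by fun_prop)
  · simp only [mem_Icc, Pi.le_def, Fin.forall_fin_two, Pi.zero_apply, Pi.one_apply]
    exact ⟨⟨h₀, h₁⟩, by linarith, by linarith⟩

/-- The affine map sending `(0, 0)`, `(1, 0)`, `(0, 1)` to `v 0`, `v 1`, `v 2`. -/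
def refMap (v : Fin 3 → Fin 2 → ℝ) (z : Fin 2 → ℝ) : Fin 2 → ℝ :=
  z 0 • (v 1 - v 0) + z 1 • (v 2 - v 0) + v 0

theorem image_refMap_refTriangle (v : Fin 3 → Fin 2 → ℝ) :
    refMap v '' refTriangle = convexHull ℝ (range v) := by
  rw [convexHull_range_eq_image_stdSimplex]
  apply Subset.antisymm
  · rintro _ ⟨z, ⟨h₀, h₁, hsum⟩, rfl⟩
    refine ⟨![1 - z 0 - z 1, z 0, z 1], ⟨?_, ?_⟩, ?_⟩
    · rw [Fin.forall_fin_succ, Fin.forall_fin_two]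
      exact ⟨show 0 ≤ 1 - z 0 - z 1 by linarith, h₀, h₁⟩
    · simp [Fin.sum_univ_three, add_assoc]
    · simp only [Fin.sum_univ_three, refMap, Matrix.cons_val]
      module
  · rintro _ ⟨c, ⟨hc, hsum⟩, rfl⟩
    rw [Fin.sum_univ_three] at hsum
    refine ⟨![c 1, c 2], ⟨hc 1, hc 2, show c 1 + c 2 ≤ 1 by linarith [hc 0]⟩, ?_⟩
    have hc₀ : c 0 = 1 - c 1 - c 2 := by linarith
    simp only [Fin.sum_univ_three, refMap, Matrix.cons_val, hc₀]
    module

theorem setIntegral_refTriangle_eq_zero_of_slices {f : (Fin 2 → ℝ) → ℝ} (hf : Continuous f)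
    (hslice : ∀ s, 0 ≤ s → s ≤ 1 → ∫ t in (0 : ℝ)..1 - s, f ![s, t] = 0) :
    ∫ z in refTriangle, f z = 0 := by
  rw [← (volume_preserving_finTwoArrow ℝ).symm.setIntegral_preimage_emb
    (MeasurableEquiv.measurableEmbedding _)]
  refine setIntegral_prod_eq_zero_of_slices
    ((MeasurableEquiv.measurable _) isCompact_refTriangle.measurableSet) ?_ fun s => ?_
  · exact ((volume_preserving_finTwoArrow ℝ).symm.integrableOn_comp_preimage
      (MeasurableEquiv.measurableEmbedding _)).2
      (hf.continuousOn.integrableOn_compact isCompact_refTriangle)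
  change ∫ t in {t | ![s, t] ∈ refTriangle}, f ![s, t] = 0
  by_cases hs : 0 ≤ s ∧ s ≤ 1
  · rw [← hslice s hs.1 hs.2, intervalIntegral.integral_of_le (sub_nonneg.2 hs.2),
      ← integral_Icc_eq_integral_Ioc]
    congr 2
    ext t
    simp [refTriangle, hs.1, le_sub_iff_add_le']
  · convert! setIntegral_empty
    ext t
    simp only [refTriangle, mem_ofPred_eq, Matrix.cons_val, mem_empty_iff_false, iff_false]
    rintro ⟨h₀, h₁, hsum⟩
    exact hs ⟨h₀, by linarith only [h₁, hsum]⟩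

theorem setIntegral_convexHull_eq_zero_of_slices (hv : AffineIndependent ℝ v)
    {f : (Fin 2 → ℝ) → ℝ} (hf : Continuous f)
    (hslice : ∀ s, 0 ≤ s → s ≤ 1 → ∫ t in (0 : ℝ)..1 - s, f (refMap v ![s, t]) = 0) :
    ∫ x in convexHull ℝ (range v), f x = 0 := by
  let M : Matrix (Fin 2) (Fin 2) ℝ := (Matrix.of ![v 1 - v 0, v 2 - v 0]).transpose
  have hM : IsUnit M := by
    rw [Matrix.isUnit_iff_isUnit_det, isUnit_iff_ne_zero]
    simpa [M, Matrix.det_fin_two, doubleArea, cross] using doubleArea_ne_zero hv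
  have hmap : refMap v = fun z => M.mulVec z + v 0 := by
    ext z k
    fin_cases k <;> simp [refMap, M, mul_comm]
  have hzero : ∫ z in refTriangle, f (refMap v z) = 0 :=
    setIntegral_refTriangle_eq_zero_of_slices (by unfold refMap; fun_prop) hslice
  rw [← image_refMap_refTriangle, integral_image_eq_integral_abs_det_fderiv_smul volume
    isCompact_refTriangle.measurableSet (f' := fun _ => M.mulVecLin.toContinuousLinearMap)
    (fun z _ => ?_) ?_, integral_smul, hzero, smul_zero]
  · rw [hmap]
    exact fun x _ y _ hxy => Matrix.mulVec_injective_of_isUnit hM (add_right_cancel hxy)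
  · rw [hmap]
    exact (M.mulVecLin.toContinuousLinearMap.hasFDerivAt.add_const _).hasFDerivWithinAt

/-- Integration of polynomials over the triangle with vertices `v`. -/
noncomputable def triangleIntegral (v : Fin 3 → Fin 2 → ℝ) : MvPolynomial (Fin 2) ℝ →ₗ[ℝ] ℝ where
  toFun p := ∫ x in convexHull ℝ (range v), eval x p
  map_add' p q := by
    have hint (r : MvPolynomial (Fin 2) ℝ) :
        IntegrableOn (fun x => eval x r) (convexHull ℝ (range v)) :=
      r.continuous_eval.continuousOn.integrableOn_compact
        ((finite_range v).isCompact_convexHull ℝ)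
    simp_rw [map_add]
    exact integral_add (hint p) (hint q)
  map_smul' c p := by
    simp_rw [smul_eval, integral_const_mul, RingHom.id_apply, smul_eq_mul]

theorem triangleIntegral_C_mul (c : ℝ) (p : MvPolynomial (Fin 2) ℝ) :
    triangleIntegral v (C c * p) = c * triangleIntegral v p := by
  rw [← smul_eq_C_mul, map_smul, smul_eq_mul]

theorem subset_closure_interior_convexHull (hv : AffineIndependent ℝ v) :
    convexHull ℝ (range v) ⊆ closure (interior (convexHull ℝ (range v))) := by
  have hspan : affineSpan ℝ (range v) = ⊤ := by
    rw [hv.affineSpan_eq_top_iff_card_eq_finrank_add_one]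
    simp
  rw [(convex_convexHull ℝ _).closure_interior_eq_closure_of_nonempty_interior
    (interior_convexHull_nonempty_iff_affineSpan_eq_top.2 hspan)]
  exact subset_closure

theorem eval_eq_zero_of_triangleIntegral_eq_zero (hv : AffineIndependent ℝ v)
    {p : MvPolynomial (Fin 2) ℝ} (hp : ∀ x ∈ convexHull ℝ (range v), 0 ≤ eval x p)
    (hint : triangleIntegral v p = 0) {x : Fin 2 → ℝ}
    (hx : x ∈ convexHull ℝ (range v)) : eval x p = 0 :=
  eqOn_zero_of_setIntegral_eq_zero ((finite_range v).isCompact_convexHull ℝ)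
    (subset_closure_interior_convexHull hv) (p.continuous_eval).continuousOn hp hint hx

theorem doubleArea_mul_eval_edgeForm_nonneg {x : Fin 2 → ℝ} (hx : x ∈ convexHull ℝ (range v))
    (i : Fin 3) : 0 ≤ doubleArea v * eval x (edgeForm v i) := by
  refine convexHull_min (t := {x | 0 ≤ doubleArea v * eval x (edgeForm v i)}) ?_ ?_ hx
  · rintro _ ⟨j, rfl⟩
    obtain rfl | hij := eq_or_ne i j
    · simpa [eval_edgeForm_self] using mul_self_nonneg _
    · simp [eval_edgeForm_of_ne v hij]
  · intro y hy z hz a b ha hb hab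
    simp only [mem_ofPred_eq, eval_edgeForm] at hy hz ⊢
    have hcomb : cross (edge v i) (a • y + b • z - v (i + 1)) =
        a * cross (edge v i) (y - v (i + 1)) + b * cross (edge v i) (z - v (i + 1)) := by
      simp only [cross, Pi.add_apply, Pi.sub_apply, Pi.smul_apply, smul_eq_mul]
      linear_combination (edge v i 0 * v (i + 1) 1 - edge v i 1 * v (i + 1) 0) * hab
    rw [hcomb]
    linarith [mul_nonneg ha hy, mul_nonneg hb hz]

theorem eval_edgeForm_centroid (i : Fin 3) :
    eval ((3 : ℝ)⁻¹ • ∑ j, v j) (edgeForm v i) = doubleArea v / 3 := by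
  rw [eval_edgeForm]
  fin_cases i <;> simp [cross, edge, doubleArea, Fin.sum_univ_three] <;> ring

theorem centroid_mem_convexHull : (3 : ℝ)⁻¹ • ∑ i, v i ∈ convexHull ℝ (range v) :=
  mem_convexHull_of_exists_fintype (fun _ => 3⁻¹) v (by simp) (by simp) (by simp)
    Finset.smul_sum.symm

/-- The cubics vanishing on the boundary are the multiples of the bubble function, which has
constant sign. -/
theorem eq_zero_of_edgeRestrict_eq_zero_of_triangleIntegral_eq_zero (hv : AffineIndependent ℝ v)
    {p : MvPolynomial (Fin 2) ℝ} (hdeg : p.totalDegree ≤ 3) (hp : ∀ i, edgeRestrict v i p = 0)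
    (hint : triangleIntegral v p = 0) : p = 0 := by
  obtain ⟨c, rfl⟩ := exists_eq_C_mul_prod_edgeForm hv hdeg hp
  have hsq (x : Fin 2 → ℝ) : eval x (C (doubleArea v ^ 3 * c) * (C c * ∏ i, edgeForm v i)) =
      c ^ 2 * ∏ i, (doubleArea v * eval x (edgeForm v i)) := by
    simp only [Fin.prod_univ_three, map_mul, eval_C]
    ring
  have hzero := eval_eq_zero_of_triangleIntegral_eq_zero hv
    (p := C (doubleArea v ^ 3 * c) * (C c * ∏ i, edgeForm v i)) (fun x hx => ?_) ?_
    centroid_mem_convexHull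
  · have hc : c = 0 := by
      simpa [hsq, eval_edgeForm_centroid, doubleArea_ne_zero hv] using hzero
    rw [hc, C_0, zero_mul]
  · rw [hsq]
    exact mul_nonneg (sq_nonneg c)
      (Finset.prod_nonneg fun i _ => doubleArea_mul_eval_edgeForm_nonneg hx i)
  · rw [triangleIntegral_C_mul, hint, mul_zero]

theorem triangleIntegral_dirDeriv_eq_zero (hv : AffineIndependent ℝ v) {p : MvPolynomial (Fin 2) ℝ}
    (h₀₁ : lineRestrict (v 0) (v 1) p = 0) (h₁₂ : lineRestrict (v 1) (v 2) p = 0) :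
    triangleIntegral v (dirDeriv (v 2 - v 0) p) = 0 := by
  refine setIntegral_convexHull_eq_zero_of_slices hv (continuous_eval _) fun s _ _ => ?_
  set a := refMap v ![s, 0]
  set P := lineRestrict a (a + (v 2 - v 0)) p
  have hline (t : ℝ) : refMap v ![s, t] = AffineMap.lineMap a (a + (v 2 - v 0)) t := by
    simp only [a, refMap, AffineMap.lineMap_apply, Matrix.cons_val, vsub_eq_sub, vadd_eq_add]
    module
  have hderiv (t : ℝ) : eval (refMap v ![s, t]) (dirDeriv (v 2 - v 0) p) = P.derivative.eval t := by
    rw [hline, derivative_lineRestrict, eval_lineRestrict, add_sub_cancel_left]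
  have hleft : P.eval 0 = 0 := by
    have : a = AffineMap.lineMap (v 0) (v 1) s := by simp [a, refMap, AffineMap.lineMap_apply]
    rw [eval_lineRestrict, AffineMap.lineMap_apply_zero, this, ← eval_lineRestrict, h₀₁,
      Polynomial.eval_zero]
  have hright : P.eval (1 - s) = 0 := by
    have : refMap v ![s, 1 - s] = AffineMap.lineMap (v 1) (v 2) (1 - s) := by
      simp only [refMap, AffineMap.lineMap_apply, Matrix.cons_val, vsub_eq_sub, vadd_eq_add]
      module
    rw [eval_lineRestrict, ← hline, this, ← eval_lineRestrict, h₁₂, Polynomial.eval_zero]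
  simp_rw [hderiv]
  rw [intervalIntegral.integral_eq_sub_of_hasDerivAt (fun t _ => P.hasDerivAt t)
    (P.derivative.continuous.intervalIntegrable _ _), hleft, hright, sub_zero]

theorem triangleIntegral_dirDeriv_edge_eq_zero (hv : AffineIndependent ℝ v)
    {p : MvPolynomial (Fin 2) ℝ} {i : Fin 3} (h₁ : edgeRestrict v (i + 1) p = 0)
    (h₂ : edgeRestrict v (i + 2) p = 0) :
    triangleIntegral v (dirDeriv (edge v i) p) = 0 := by
  have hrot : triangleIntegral v = triangleIntegral (v ∘ Equiv.addRight (i + 2)) := by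
    simp only [triangleIntegral, EquivLike.range_comp]
  have hedge : edge v i =
      -((v ∘ Equiv.addRight (i + 2)) 2 - (v ∘ Equiv.addRight (i + 2)) 0) := by
    fin_cases i <;> simp [edge]
  rw [hedge, dirDeriv_neg, map_neg, neg_eq_zero, hrot]
  apply triangleIntegral_dirDeriv_eq_zero (hv.comp_embedding (Equiv.addRight (i + 2)).toEmbedding)
  · fin_cases i <;> exact h₁
  · fin_cases i <;> exact h₂

end TriangleIntegral

section EdgeRestrict

variable {v : Fin 3 → Fin 2 → ℝ} {p : MvPolynomial (Fin 2) ℝ} {i : Fin 3}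

theorem eval_vertex_add_one_eq_zero (hp : edgeRestrict v i p = 0) : eval (v (i + 1)) p = 0 := by
  simpa [hp] using (eval_lineRestrict (v (i + 1)) (v (i + 2)) p 0).symm

theorem eval_vertex_add_two_eq_zero (hp : edgeRestrict v i p = 0) : eval (v (i + 2)) p = 0 := by
  simpa [hp] using (eval_lineRestrict (v (i + 1)) (v (i + 2)) p 1).symm

theorem edgeRestrict_dirDeriv_edge_eq_zero (hp : edgeRestrict v i p = 0) :
    edgeRestrict v i (dirDeriv (edge v i) p) = 0 := by
  rw [edge, ← derivative_lineRestrict, hp, Polynomial.derivative_zero]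

theorem eval_dirDeriv_edge_eq_zero (h₁ : edgeRestrict v (i + 1) p = 0)
    (h₂ : edgeRestrict v (i + 2) p = 0) : eval (v i) (dirDeriv (edge v i) p) = 0 := by
  have hd₁ := eval_vertex_add_two_eq_zero (edgeRestrict_dirDeriv_edge_eq_zero h₁)
  have hd₂ := eval_vertex_add_one_eq_zero (edgeRestrict_dirDeriv_edge_eq_zero h₂)
  have hsum : edge v i = -(edge v (i + 1) + edge v (i + 2)) := by
    fin_cases i <;> simp [edge]
  rw [show i + 1 + 2 = i from (add_assoc i 1 2).trans (add_zero i)] at hd₁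
  rw [show i + 2 + 1 = i from (add_assoc i 2 1).trans (add_zero i)] at hd₂
  rw [hsum, dirDeriv_neg, dirDeriv_add, map_neg, map_add, hd₁, hd₂, add_zero, neg_zero]

theorem triangleIntegral_dirDeriv_edge_mul_eq_zero (hv : AffineIndependent ℝ v)
    (h₁ : edgeRestrict v (i + 1) p = 0) (h₂ : edgeRestrict v (i + 2) p = 0)
    (hint : triangleIntegral v p = 0) {w : MvPolynomial (Fin 2) ℝ}
    (hw : w.totalDegree ≤ 1) :
    triangleIntegral v (dirDeriv (edge v i) p * w) = 0 := by
  obtain ⟨c, hc⟩ : ∃ c, dirDeriv (edge v i) w = C c :=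
    ⟨_, totalDegree_eq_zero_iff_eq_C.1
      (Nat.le_zero.1 ((totalDegree_dirDeriv_le _ w).trans (Nat.sub_le_of_le_add hw)))⟩
  have hparts := triangleIntegral_dirDeriv_edge_eq_zero (p := p * w) hv
    (by rw [map_mul, h₁, zero_mul]) (by rw [map_mul, h₂, zero_mul])
  rw [Derivation.leibniz, hc, smul_eq_mul, smul_eq_mul, mul_comm p, mul_comm w, map_add,
    triangleIntegral_C_mul, hint, mul_zero, zero_add] at hparts
  exact hparts

theorem eq_of_sum_smul_edge_eq_zero (hv : AffineIndependent ℝ v) {g : Fin 3 → ℝ}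
    (hg : ∑ i, g i • edge v i = 0) (i j : Fin 3) : g i = g j := by
  have hsucc (i : Fin 3) : g (i + 1) = g (i + 2) := by
    have hcross :
        doubleArea v * (g (i + 1) - g (i + 2)) = cross (edge v i) (∑ j, g j • edge v j) := by
      fin_cases i <;> simp [Fin.sum_univ_three, cross, edge, doubleArea] <;> ring
    rw [hg, cross, Pi.zero_apply, Pi.zero_apply, mul_zero, mul_zero, sub_zero] at hcross
    exact sub_eq_zero.1 ((mul_eq_zero.1 hcross).resolve_left (doubleArea_ne_zero hv))
  have h₀ := hsucc 0
  have h₁ := hsucc 1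
  fin_cases i <;> fin_cases j <;> simp_all

theorem edgeRestrict_eq_zero_of_dirDeriv (hdeg : p.totalDegree ≤ 3)
    (h₁ : edgeRestrict v (i + 1) p = 0) (h₂ : edgeRestrict v (i + 2) p = 0)
    (hd : ∀ j, eval (v j) (dirDeriv (edge v i) p) = 0) : edgeRestrict v i p = 0 := by
  have hv₁ := eval_vertex_add_two_eq_zero h₂
  have hv₂ := eval_vertex_add_one_eq_zero h₁
  rw [show i + 2 + 2 = i + 1 from add_assoc i 2 2] at hv₁
  rw [show i + 1 + 1 = i + 2 from add_assoc i 1 1] at hv₂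
  refine eq_zero_of_double_roots (zero_ne_one' ℝ)
    (Nat.lt_succ_of_le ((natDegree_lineRestrict_le _ _ p).trans hdeg)) ?_ ?_ ?_ ?_
  · rwa [eval_lineRestrict, AffineMap.lineMap_apply_zero]
  · rw [derivative_lineRestrict, eval_lineRestrict, AffineMap.lineMap_apply_zero]
    exact hd _
  · rwa [eval_lineRestrict, AffineMap.lineMap_apply_one]
  · rw [derivative_lineRestrict, eval_lineRestrict, AffineMap.lineMap_apply_one]
    exact hd _

end EdgeRestrict

section StressField

variable {v : Fin 3 → Fin 2 → ℝ} {q : Matrix (Fin 2) (Fin 2) (MvPolynomial (Fin 2) ℝ)}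

/-- The traction `q n` of a polynomial stress field. -/
noncomputable def traction (q : Matrix (Fin 2) (Fin 2) (MvPolynomial (Fin 2) ℝ)) (n : Fin 2 → ℝ) :
    Fin 2 → MvPolynomial (Fin 2) ℝ :=
  q.mulVec fun l => C (n l)

/-- The row-wise divergence of a polynomial stress field. -/
noncomputable def divergence (q : Matrix (Fin 2) (Fin 2) (MvPolynomial (Fin 2) ℝ)) (k : Fin 2) :
    MvPolynomial (Fin 2) ℝ :=
  ∑ l, pderiv l (q k l)

/-- The component `nᵢ₊₁ᵀ q nᵢ₊₂` of a polynomial stress field, where `nⱼ` is the normal to the edge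
opposite `v j`. Up to the factor `-(doubleArea v)²`, it is the coefficient of `q` at `eᵢ eᵢᵀ` in the
basis of the symmetric matrices formed by the edge vectors `e₀`, `e₁`, `e₂`. -/
noncomputable def cornerStress (v : Fin 3 → Fin 2 → ℝ)
    (q : Matrix (Fin 2) (Fin 2) (MvPolynomial (Fin 2) ℝ)) (i : Fin 3) : MvPolynomial (Fin 2) ℝ :=
  ∑ k, C (rot (edge v (i + 1)) k) * traction q (rot (edge v (i + 2))) k

theorem eval_traction (x n : Fin 2 → ℝ) (k : Fin 2) :
    eval x (traction q n k) = (q.map (eval x)).mulVec n k := by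
  simp [traction, Matrix.mulVec, dotProduct]

theorem totalDegree_traction_le {d : ℕ} (hdeg : ∀ k l, (q k l).totalDegree ≤ d) (n : Fin 2 → ℝ)
    (k : Fin 2) : (traction q n k).totalDegree ≤ d := by
  refine totalDegree_finsetSum_le fun l _ => ?_
  rw [mul_comm, ← smul_eq_C_mul]
  exact (totalDegree_smul_le _ _).trans (hdeg k l)

theorem totalDegree_cornerStress_le {d : ℕ} (hdeg : ∀ k l, (q k l).totalDegree ≤ d) (i : Fin 3) :
    (cornerStress v q i).totalDegree ≤ d := by
  refine totalDegree_finsetSum_le fun k _ => ?_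
  rw [← smul_eq_C_mul]
  exact (totalDegree_smul_le _ _).trans (totalDegree_traction_le hdeg _ k)

theorem cornerStress_eq_of_isSymm (hq : q.IsSymm) (i : Fin 3) :
    cornerStress v q i =
      ∑ k, C (rot (edge v (i + 2)) k) * traction q (rot (edge v (i + 1))) k := by
  simp only [cornerStress, traction, Matrix.mulVec, dotProduct, Fin.sum_univ_two, hq.apply 0 1]
  ring

theorem edgeRestrict_add_one_cornerStress (hq : q.IsSymm)
    (htraction : ∀ i k, edgeRestrict v i (traction q (rot (edge v i)) k) = 0) (i : Fin 3) :
    edgeRestrict v (i + 1) (cornerStress v q i) = 0 := by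
  simp [cornerStress_eq_of_isSymm hq, htraction]

theorem edgeRestrict_add_two_cornerStress
    (htraction : ∀ i k, edgeRestrict v i (traction q (rot (edge v i)) k) = 0) (i : Fin 3) :
    edgeRestrict v (i + 2) (cornerStress v q i) = 0 := by
  simp [cornerStress, htraction]

theorem triangleIntegral_cornerStress_eq_zero
    (hmean : ∀ k l, triangleIntegral v (q k l) = 0) (i : Fin 3) :
    triangleIntegral v (cornerStress v q i) = 0 := by
  simp [cornerStress, traction, Matrix.mulVec, dotProduct, mul_comm _ (C _), triangleIntegral_C_mul,
    hmean, -Fin.sum_univ_two, Finset.mul_sum]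

theorem doubleArea_sq_mul_apply (hq : q.IsSymm) (k l : Fin 2) :
    C (doubleArea v ^ 2) * q k l = -∑ i, C (edge v i k * edge v i l) * cornerStress v q i := by
  refine funext fun x => ?_
  fin_cases k <;> fin_cases l <;>
    simp [cornerStress, eval_traction, Matrix.mulVec, dotProduct, Fin.sum_univ_three, rot, edge,
      doubleArea, cross, hq.apply 0 1] <;>
    ring

theorem doubleArea_sq_mul_divergence (hq : q.IsSymm) (k : Fin 2) :
    C (doubleArea v ^ 2) * divergence q k =
      -∑ i, C (edge v i k) * dirDeriv (edge v i) (cornerStress v q i) := by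
  calc C (doubleArea v ^ 2) * divergence q k = ∑ l, pderiv l (C (doubleArea v ^ 2) * q k l) := by
        simp only [divergence, Finset.mul_sum, pderiv_C_mul]
    _ = -∑ i, ∑ l, C (edge v i k * edge v i l) * pderiv l (cornerStress v q i) := by
        simp only [doubleArea_sq_mul_apply hq, map_neg, map_sum, pderiv_C_mul,
          Finset.sum_neg_distrib]
        rw [Finset.sum_comm]
    _ = _ := by simp only [dirDeriv_eq_sum_pderiv, Finset.mul_sum, C_mul, mul_assoc]

theorem eval_divergence_eq_zero (hv : AffineIndependent ℝ v) (hq : q.IsSymm)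
    (hdiv : ∀ k, (divergence q k).totalDegree ≤ 1)
    (htraction : ∀ i k, edgeRestrict v i (traction q (rot (edge v i)) k) = 0)
    (hmean : ∀ k l, triangleIntegral v (q k l) = 0)
    {x : Fin 2 → ℝ} (hx : x ∈ convexHull ℝ (range v)) (k : Fin 2) :
    eval x (divergence q k) = 0 := by
  have horth : triangleIntegral v (divergence q k * divergence q k) = 0 := by
    have hscaled : triangleIntegral v
        (C (doubleArea v ^ 2) * divergence q k * divergence q k) = 0 := by
      rw [doubleArea_sq_mul_divergence hq, neg_mul, Finset.sum_mul, map_neg, map_sum, neg_eq_zero]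
      refine Finset.sum_eq_zero fun i _ => ?_
      rw [mul_assoc, triangleIntegral_C_mul, triangleIntegral_dirDeriv_edge_mul_eq_zero hv
        (edgeRestrict_add_one_cornerStress hq htraction i)
        (edgeRestrict_add_two_cornerStress htraction i)
        (triangleIntegral_cornerStress_eq_zero hmean i) (hdiv k), mul_zero]
    rw [mul_assoc, triangleIntegral_C_mul] at hscaled
    exact (mul_eq_zero.1 hscaled).resolve_left (pow_ne_zero 2 (doubleArea_ne_zero hv))
  have hsq := eval_eq_zero_of_triangleIntegral_eq_zero hv
    (fun y _ => by rw [map_mul]; exact mul_self_nonneg _) horth hx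
  rwa [map_mul, mul_self_eq_zero] at hsq

theorem eval_dirDeriv_cornerStress_eq_zero (hv : AffineIndependent ℝ v) (hq : q.IsSymm)
    (hdiv : ∀ k, (divergence q k).totalDegree ≤ 1)
    (htraction : ∀ i k, edgeRestrict v i (traction q (rot (edge v i)) k) = 0)
    (hmean : ∀ k l, triangleIntegral v (q k l) = 0) (i j : Fin 3) :
    eval (v j) (dirDeriv (edge v i) (cornerStress v q i)) = 0 := by
  have hsum : ∑ i, eval (v j) (dirDeriv (edge v i) (cornerStress v q i)) • edge v i = 0 := by
    ext k
    have hdiv₀ := eval_divergence_eq_zero hv hq hdiv htraction hmean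
      (subset_convexHull ℝ _ (mem_range_self j)) k
    have := congrArg (eval (v j)) (doubleArea_sq_mul_divergence (v := v) hq k)
    simpa [hdiv₀, mul_comm] using this
  rw [eq_of_sum_smul_edge_eq_zero hv hsum i j]
  exact eval_dirDeriv_edge_eq_zero (edgeRestrict_add_one_cornerStress hq htraction j)
    (edgeRestrict_add_two_cornerStress htraction j)

theorem cornerStress_eq_zero (hv : AffineIndependent ℝ v) (hq : q.IsSymm)
    (hdeg : ∀ k l, (q k l).totalDegree ≤ 3) (hdiv : ∀ k, (divergence q k).totalDegree ≤ 1)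
    (htraction : ∀ i k, edgeRestrict v i (traction q (rot (edge v i)) k) = 0)
    (hmean : ∀ k l, triangleIntegral v (q k l) = 0) (i : Fin 3) :
    cornerStress v q i = 0 := by
  have h₁ := edgeRestrict_add_one_cornerStress hq htraction i
  have h₂ := edgeRestrict_add_two_cornerStress htraction i
  have h₀ := edgeRestrict_eq_zero_of_dirDeriv (totalDegree_cornerStress_le hdeg i) h₁ h₂
    (eval_dirDeriv_cornerStress_eq_zero hv hq hdiv htraction hmean i)
  refine eq_zero_of_edgeRestrict_eq_zero_of_triangleIntegral_eq_zero hv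
    (totalDegree_cornerStress_le hdeg i) (fun j => ?_)
    (triangleIntegral_cornerStress_eq_zero hmean i)
  obtain rfl | rfl | rfl : j = i ∨ j = i + 1 ∨ j = i + 2 := by clear h₀ h₁ h₂; decide +revert
  exacts [h₀, h₁, h₂]

theorem eq_zero_of_edgeRestrict_traction_eq_zero (hv : AffineIndependent ℝ v) (hq : q.IsSymm)
    (hdeg : ∀ k l, (q k l).totalDegree ≤ 3) (hdiv : ∀ k, (divergence q k).totalDegree ≤ 1)
    (htraction : ∀ i k, edgeRestrict v i (traction q (rot (edge v i)) k) = 0)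
    (hmean : ∀ k l, triangleIntegral v (q k l) = 0) : q = 0 := by
  ext1 k l
  have h := doubleArea_sq_mul_apply (v := v) hq k l
  simpa [cornerStress_eq_zero hv hq hdeg hdiv htraction hmean, doubleArea_ne_zero hv] using h

end StressField

section DegreesOfFreedom

variable {v : Fin 3 → Fin 2 → ℝ} {q : Matrix (Fin 2) (Fin 2) (MvPolynomial (Fin 2) ℝ)}

theorem pd2_eval (i : Fin 2) (p : MvPolynomial (Fin 2) ℝ) (x : Fin 2 → ℝ) :
    pd2 i (fun y => eval y p) x = eval x (pderiv i p) := by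
  simp [pd2, (hasFDerivAt_eval p x).fderiv, Pi.single_apply, -Fin.sum_univ_two]

theorem divRow_map_eval (x : Fin 2 → ℝ) (k : Fin 2) :
    divRow (fun y => q.map (eval y)) x k = eval x (divergence q k) := by
  simp only [divRow, Matrix.map_apply, pd2_eval, divergence, Fin.sum_univ_two, map_add]

theorem totalDegree_divergence_le_of_divRow_mem {d : ℕ}
    (hdiv : (fun x k => divRow (fun y => q.map (eval y)) x k) ∈ PolyVF2 d) (k : Fin 2) :
    (divergence q k).totalDegree ≤ d := by
  obtain ⟨r, hr, hdivr⟩ := hdiv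
  have : divergence q k = r k := funext fun x => (divRow_map_eval x k).symm.trans (hdivr x k)
  exact this ▸ hr k

theorem isSymm_of_forall_isSymm_map_eval (hq : ∀ x, (q.map (eval x)).IsSymm) : q.IsSymm :=
  Matrix.IsSymm.ext fun k l => funext fun x => (hq x).apply k l

theorem lineRestrict_traction_eq_zero_of_moments (hdeg : ∀ k l, (q k l).totalDegree ≤ 3)
    {a b n : Fin 2 → ℝ} (ha : q.map (eval a) = 0) (hb : q.map (eval b) = 0)
    (hmoment₀ : ∫ t in (0 : ℝ)..1, (q.map (eval ((1 - t) • a + t • b))).mulVec n = 0)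
    (hmoment₁ : ∫ t in (0 : ℝ)..1, t • (q.map (eval ((1 - t) • a + t • b))).mulVec n = 0)
    (k : Fin 2) : lineRestrict a b (traction q n k) = 0 := by
  have hcont : Continuous fun t : ℝ => (q.map (eval ((1 - t) • a + t • b))).mulVec n := by
    simp_rw [continuous_pi_iff, ← eval_traction]
    exact fun l => (continuous_eval _).comp (by fun_prop)
  refine lineRestrict_eq_zero_of_moments (n := 1) (totalDegree_traction_le hdeg n k) ?_ ?_
    fun m hm => ?_
  · rw [eval_traction, ha, Matrix.zero_mulVec, Pi.zero_apply]
  · rw [eval_traction, hb, Matrix.zero_mulVec, Pi.zero_apply]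
  · simp_rw [eval_traction, AffineMap.lineMap_apply_module]
    interval_cases m
    · simp_rw [pow_zero, one_mul]
      exact (intervalIntegral_apply hcont 0 1 k).symm.trans (congrFun hmoment₀ k)
    · simp_rw [pow_one]
      exact (intervalIntegral_apply (continuous_id.smul hcont) 0 1 k).symm.trans
        (congrFun hmoment₁ k)

end DegreesOfFreedom

end ArnoldWinther

open ArnoldWinther

/-- Unisolvence of the 24 degrees of freedom of the lowest order Arnold–Winther
mixed finite element for planar elasticity: a shape function whose vertex values,
edge moments of degree 0 and 1 of the normal traction, and entrywise mean over the
triangle all vanish is identically zero. -/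
theorem arnold_winther_unisolvence
    (v : Fin 3 → Fin 2 → ℝ) (hv : AffineIndependent ℝ v)
    (τ : (Fin 2 → ℝ) → Matrix (Fin 2) (Fin 2) ℝ)
    (hsymm : ∀ x, (τ x).IsSymm)
    (hpoly : τ ∈ PolyMat2 3)
    (hdiv : (fun x i => divRow τ x i) ∈ PolyVF2 1)
    -- (a) vertex values vanish
    (ha : ∀ i, τ (v i) = 0)
    -- (b) moments of degree 0 and 1 of the normal traction τn vanish on each edge
    (hb : ∀ i j : Fin 3, i ≠ j → ∀ n : Fin 2 → ℝ, n ≠ 0 →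
      (∑ k, n k * (v j - v i) k) = 0 →
      (∫ t in (0:ℝ)..1, (τ ((1 - t) • v i + t • v j)).mulVec n) = 0 ∧
      (∫ t in (0:ℝ)..1, t • (τ ((1 - t) • v i + t • v j)).mulVec n) = 0)
    -- (c) the entrywise mean over the triangle vanishes
    (hc : ∀ i j : Fin 2, (∫ x in convexHull ℝ (Set.range v), τ x i j) = 0) :
    ∀ x, τ x = 0 := by
  obtain ⟨q, hdeg, hτ⟩ := hpoly
  obtain rfl : τ = fun x => q.map (MvPolynomial.eval x) := funext fun x => Matrix.ext (hτ x)
  have htraction (i : Fin 3) (k : Fin 2) :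
      edgeRestrict v i (traction q (rot (edge v i)) k) = 0 := by
    obtain ⟨hmoment₀, hmoment₁⟩ := hb (i + 1) (i + 2) (by simp) (rot (edge v i))
      (rot_edge_ne_zero hv i) (sum_rot_mul_self _)
    exact lineRestrict_traction_eq_zero_of_moments hdeg (ha _) (ha _) hmoment₀ hmoment₁ k
  obtain rfl : q = 0 := eq_zero_of_edgeRestrict_traction_eq_zero hv
    (isSymm_of_forall_isSymm_map_eval hsymm) hdeg
    (totalDegree_divergence_le_of_divRow_mem hdiv) htraction hc
  exact fun x => Matrix.map_zero _ (map_zero _)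
end

section
/- Let Ω ⊆ ℝ³ be a nonempty convex open set and let F : ℝ³ → ℝ³ be continuously differentiable on Ω with curl F = 0 on Ω, i.e., ∂₂F₃ = ∂₃F₂, ∂₃F₁ = ∂₁F₃, and ∂₁F₂ = ∂₂F₁ on Ω. Then there exists a differentiable function f : ℝ³ → ℝ such that F = grad f on Ω, i.e., Fᵢ = ∂ᵢf on Ω for i = 1, 2, 3. -/
/-- The `i`-th partial derivative of a scalar function on `ℝ³`. -/
noncomputable def pd (i : Fin 3) (f : (Fin 3 → ℝ) → ℝ) (x : Fin 3 → ℝ) : ℝ :=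
  fderiv ℝ f x (Pi.single i 1)

/-!
Identify `F` with the 1-form `ω x = ∑ i, F x i dxᵢ`. The entries of `Dω` in the standard basis are
the partial derivatives `∂ᵢFⱼ`, so the curl vanishes exactly when the bilinear map `Dω x` is
symmetric, that is, when `ω` is closed. By the Poincaré lemma a closed 1-form on a convex open set
has a primitive `f`, and evaluating `df = ω` on the standard basis gives `∂ᵢf = Fᵢ`.
-/

theorem clm_apply_comm_of_basis {𝕜 E G ι : Type*} [NontriviallyNormedField 𝕜]
    [NormedAddCommGroup E] [NormedSpace 𝕜 E] [NormedAddCommGroup G] [NormedSpace 𝕜 G]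
    (b : Module.Basis ι 𝕜 E) {B : E →L[𝕜] E →L[𝕜] G}
    (hB : ∀ i j, B (b i) (b j) = B (b j) (b i)) (x y : E) : B x y = B y x := by
  have eq_flip : B.toLinearMap₁₂ = B.flip.toLinearMap₁₂ := LinearMap.ext_basis b b hB
  exact LinearMap.congr_fun₂ eq_flip x y

theorem fin_three_forall_comm_of_cyclic {α : Type*} {s : Fin 3 → Fin 3 → α}
    (h12 : s 1 2 = s 2 1) (h20 : s 2 0 = s 0 2) (h01 : s 0 1 = s 1 0) (i j : Fin 3) :
    s i j = s j i := by
  fin_cases i <;> fin_cases j <;> first | rfl | assumption | (symm; assumption)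

section PiRing

variable {𝕜 ι G : Type*} [NontriviallyNormedField 𝕜] [CompleteSpace 𝕜] [Fintype ι] [DecidableEq ι]
  [NormedAddCommGroup G] [NormedSpace 𝕜 G]

theorem piRing_symm_apply_single (v : ι → G) (i : ι) :
    (ContinuousLinearEquiv.piRing (𝕜 := 𝕜) ι).symm v (Pi.single i 1) = v i :=
  congrFun ((ContinuousLinearEquiv.piRing (𝕜 := 𝕜) ι).apply_symm_apply v) i

theorem fderiv_piRing_symm_comp_apply_single {E : Type*} [NormedAddCommGroup E] [NormedSpace 𝕜 E]
    {F : E → ι → G} {x : E} (hF : DifferentiableAt 𝕜 F x) (v : E) (j : ι) :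
    fderiv 𝕜 ((ContinuousLinearEquiv.piRing (𝕜 := 𝕜) ι).symm ∘ F) x v (Pi.single j 1) =
      fderiv 𝕜 (fun y => F y j) x v := by
  rw [ContinuousLinearEquiv.comp_fderiv, fderiv_apply hF j]
  exact piRing_symm_apply_single (fderiv 𝕜 F x v) j

end PiRing

theorem curl_free_is_gradient_on_convex_general {ι G : Type*} [Finite ι] [DecidableEq ι]
    [NormedAddCommGroup G] [NormedSpace ℝ G] [CompleteSpace G]
    {Ω : Set (ι → ℝ)} (hconv : Convex ℝ Ω) (hΩ : IsOpen Ω)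
    {F : (ι → ℝ) → ι → G} (hF : DifferentiableOn ℝ F Ω)
    (hcurl : ∀ x ∈ Ω, ∀ i j, fderiv ℝ (fun y => F y j) x (Pi.single i 1) =
      fderiv ℝ (fun y => F y i) x (Pi.single j 1)) :
    ∃ f : (ι → ℝ) → G, DifferentiableOn ℝ f Ω ∧
      ∀ x ∈ Ω, ∀ i, F x i = fderiv ℝ f x (Pi.single i 1) := by
  have := Fintype.ofFinite ι
  let ω : (ι → ℝ) → (ι → ℝ) →L[ℝ] G := (ContinuousLinearEquiv.piRing (𝕜 := ℝ) ι).symm ∘ F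
  have ω_differentiable : DifferentiableOn ℝ ω Ω :=
    (ContinuousLinearEquiv.piRing ι).symm.comp_differentiableOn_iff.2 hF
  have ω_closed : ∀ x ∈ Ω, ∀ u v, fderiv ℝ ω x u v = fderiv ℝ ω x v u := by
    intro x hx
    have hFx : DifferentiableAt ℝ F x := hF.differentiableAt (hΩ.mem_nhds hx)
    refine clm_apply_comm_of_basis (Pi.basisFun ℝ ι) fun i j => ?_
    simp only [Pi.basisFun_apply, ω, fderiv_piRing_symm_comp_apply_single hFx]
    exact hcurl x hx i j
  obtain ⟨f, hf⟩ :=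
    hconv.exists_forall_hasFDerivAt_of_fderiv_symmetric hΩ ω_differentiable ω_closed
  refine ⟨f, fun x hx => (hf x hx).differentiableAt.differentiableWithinAt, fun x hx i => ?_⟩
  rw [(hf x hx).fderiv]
  exact (piRing_symm_apply_single (F x) i).symm

/-- Exactness of the de Rham complex at the first stage on a convex domain: every
`C¹` curl-free vector field on a nonempty convex open set `Ω ⊆ ℝ³` is a gradient. -/
theorem curl_free_is_gradient_on_convex
    (Ω : Set (Fin 3 → ℝ)) (hne : Ω.Nonempty) (hconv : Convex ℝ Ω) (hΩ : IsOpen Ω)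
    (F : (Fin 3 → ℝ) → Fin 3 → ℝ) (hF : ContDiffOn ℝ 1 F Ω)
    (h1 : ∀ x ∈ Ω, pd 1 (fun y => F y 2) x = pd 2 (fun y => F y 1) x)
    (h2 : ∀ x ∈ Ω, pd 2 (fun y => F y 0) x = pd 0 (fun y => F y 2) x)
    (h3 : ∀ x ∈ Ω, pd 0 (fun y => F y 1) x = pd 1 (fun y => F y 0) x) :
    ∃ f : (Fin 3 → ℝ) → ℝ, DifferentiableOn ℝ f Ω ∧
      ∀ x ∈ Ω, ∀ i : Fin 3, F x i = pd i f x :=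
  curl_free_is_gradient_on_convex_general hconv hΩ hF.differentiableOn_one fun x hx =>
    fin_three_forall_comm_of_cyclic (s := fun i j => pd i (fun y => F y j) x)
      (h1 x hx) (h2 x hx) (h3 x hx)
end
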